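/- arXiv:0907.3853 — 9 statements merged into one kernel-verified Lean document; each statement's English description precedes it below -/
import Mathlib

section
/- For every natural number n, the number of pairs (n₁, M) such that 1 ≤ n₁ ≤ n−1, n₂ = n − n₁, and M = [(m_1,μ_1),…,(m_r,μ_r)] is an admissible list satisfying m_i ≤ n₁ and μ_i ≤ n₂ for all i, m_1 > 0, and (in case r = 1) μ_1 < n₂, equals F(n+6) − (n² + 4n + 8). (This number H(n) counts, up to isomorphism, the complete simple games with n voters of exactly two different types, via the Carreras–Freixas parametrization.) -/
/-- A matrix with `r ≥ 1` rows and two columns of nonnegative integers,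
represented as a nonempty list of pairs, is *admissible* if its first
components are strictly decreasing and its row sums are strictly increasing. -/
def Admissible (M : List (ℕ × ℕ)) : Prop :=
  M ≠ [] ∧ M.Chain' (fun p q => q.1 < p.1 ∧ p.1 + p.2 < q.1 + q.2)

/-- The set of admissible lists counted by `G(a,b)`: all entries of the first
column are at most `a`, all entries of the second column are at most `b`,
the first entry of the first row is positive, and if there is only one row
then its second entry is strictly less than `b`. -/
def Gset (a b : ℕ) : Set (List (ℕ × ℕ)) :=
  {M | Admissible M ∧ (∀ p ∈ M, p.1 ≤ a ∧ p.2 ≤ b) ∧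
       (∃ p, M.head? = some p ∧ 0 < p.1) ∧
       (M.length = 1 → ∃ p, M.head? = some p ∧ p.2 < b)}

/-- The set counted by `H(n)`: pairs `(n₁, M)` with `1 ≤ n₁ ≤ n - 1` and
`M` an admissible list counted by `G(n₁, n - n₁)`. -/
def Hset (n : ℕ) : Set (ℕ × List (ℕ × ℕ)) :=
  {x | 1 ≤ x.1 ∧ x.1 ≤ n - 1 ∧ x.2 ∈ Gset x.1 (n - x.1)}

/-!
Peel off the first row. The rows that may follow a row `(m, μ)` when the second column is bounded
by `b` satisfy a Pascal-type recursion, so there are `∑ i ≤ m, C(b - 1 - μ, i)` ways to continue.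
Summing over the first row with the hockey-stick identity gives
`G(a, b) = ∑ 1 ≤ m ≤ a, ∑ i ≤ m, C(b, i + 1)`. Along the antidiagonal `a + b = n` the two partial
sums in the first variable become partial sums over `n` of the antidiagonal sums
`∑ C(b, i + 1) = F(n + 2) - 1`. Two summations turn `F(n + 2)` into `F(n + 6)`; the
polynomial `n² + 4n + 8` collects the constants of summation and the missing terms `m = 0`.
-/

open Finset

lemma encard_biUnion_image_of_injective2 {α β γ : Type*} {f : α → β → γ}
    (hf : Function.Injective2 f) (s : Finset α) (t : α → Set β) :
    (⋃ a ∈ s, f a '' t a).encard = ∑ a ∈ s, (t a).encard := by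
  have disjoint_pieces : (s : Set α).PairwiseDisjoint fun a ↦ f a '' t a := by
    refine fun a _ a' _ hne ↦ Set.disjoint_left.2 ?_
    rintro _ ⟨b, -, rfl⟩ ⟨b', -, heq⟩
    exact hne (hf heq).1.symm
  calc (⋃ a ∈ s, f a '' t a).encard
      = ∑ a ∈ s, (f a '' t a).encard := by
        rw [← finsum_mem_coe_finset]
        exact s.finite_toSet.encard_biUnion disjoint_pieces
    _ = ∑ a ∈ s, (t a).encard := sum_congr rfl fun a _ ↦ (hf.right a).encard_image _

section BinomialSums

lemma sum_range_choose_eq_choose_succ (n i : ℕ) :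
    ∑ k ∈ range n, k.choose i = n.choose (i + 1) := by
  induction n with
  | zero => simp
  | succ n ih => rw [sum_range_succ, ih, Nat.choose_succ_succ', add_comm]

lemma sum_range_zero_choose (m : ℕ) : ∑ i ∈ range (m + 1), Nat.choose 0 i = 1 := by
  simp [sum_range_succ']

lemma sum_range_succ_choose (m k : ℕ) :
    ∑ i ∈ range (m + 2), (k + 1).choose i =
      ∑ i ∈ range (m + 1), k.choose i + ∑ i ∈ range (m + 2), k.choose i := by
  rw [sum_range_succ', sum_range_succ' (k.choose ·) (m + 1)]
  simp only [Nat.choose_succ_succ', sum_add_distrib, Nat.choose_zero_right, add_assoc]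

lemma sum_antidiagonal_sum_range {M : Type*} [AddCommMonoid M] (f : ℕ → ℕ → M) (n : ℕ) :
    ∑ x ∈ antidiagonal n, ∑ i ∈ range (x.1 + 1), f i x.2 =
      ∑ k ∈ range (n + 1), ∑ x ∈ antidiagonal k, f x.1 x.2 := by
  induction n with
  | zero => simp
  | succ n ih =>
    rw [sum_range_succ, ← ih, Nat.sum_antidiagonal_succ, Nat.sum_antidiagonal_succ]
    simp only [sum_range_succ _ (_ + 1), sum_add_distrib, zero_add, sum_range_one]
    exact add_left_comm _ _ _

lemma sum_antidiagonal_choose_succ_add_eq_fib (n : ℕ) :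
    ∑ x ∈ antidiagonal n, x.2.choose (x.1 + 1) + 1 = Nat.fib (n + 2) := by
  rw [Nat.fib_succ_eq_sum_choose, ← Nat.sum_antidiagonal_swap (n := n + 1),
    Nat.sum_antidiagonal_succ, add_comm]
  simp

lemma sum_antidiagonal_sum_choose_succ_add_eq_fib (n : ℕ) :
    ∑ x ∈ antidiagonal n, ∑ i ∈ range (x.1 + 1), x.2.choose (i + 1) + (n + 3) =
      Nat.fib (n + 4) := by
  rw [sum_antidiagonal_sum_range fun i b ↦ b.choose (i + 1)]
  induction n with
  | zero => rfl
  | succ n ih =>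
    rw [sum_range_succ]
    have diagonal := sum_antidiagonal_choose_succ_add_eq_fib (n + 1)
    have fib_rec : Nat.fib (n + 5) = Nat.fib (n + 3) + Nat.fib (n + 4) := Nat.fib_add_two
    lia

lemma sum_antidiagonal_sum_sum_choose_succ_add_eq_fib (n : ℕ) :
    ∑ x ∈ antidiagonal n, ∑ m ∈ range (x.1 + 1), ∑ i ∈ range (m + 1), x.2.choose (i + 1) +
      (∑ k ∈ range (n + 1), (k + 3) + 5) = Nat.fib (n + 6) := by
  rw [sum_antidiagonal_sum_range fun m b ↦ ∑ i ∈ range (m + 1), b.choose (i + 1)]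
  induction n with
  | zero => rfl
  | succ n ih =>
    rw [sum_range_succ, sum_range_succ (· + 3)]
    have diagonal := sum_antidiagonal_sum_choose_succ_add_eq_fib (n + 1)
    have fib_rec : Nat.fib (n + 7) = Nat.fib (n + 5) + Nat.fib (n + 6) := Nat.fib_add_two
    lia

lemma sum_antidiagonal_snd (n : ℕ) : ∑ x ∈ antidiagonal n, x.2 = ∑ k ∈ range (n + 1), k := by
  rw [← Nat.sum_antidiagonal_swap, Nat.sum_antidiagonal_eq_sum_range_succ_mk]
  rfl

lemma sum_antidiagonal_sum_Icc_sum_choose_succ_add_eq_fib (n : ℕ) :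
    ∑ x ∈ antidiagonal n, ∑ m ∈ Icc 1 x.1, ∑ i ∈ range (m + 1), x.2.choose (i + 1) +
      (n ^ 2 + 4 * n + 8) = Nat.fib (n + 6) := by
  have split_off_zero (a b : ℕ) :
      ∑ m ∈ range (a + 1), ∑ i ∈ range (m + 1), b.choose (i + 1) =
        b + ∑ m ∈ Icc 1 a, ∑ i ∈ range (m + 1), b.choose (i + 1) := by
    rw [range_eq_Ico, sum_eq_sum_Ico_succ_bot (Nat.zero_lt_succ a), Nat.succ_eq_add_one,
      Ico_add_one_right_eq_Icc]
    simp
  have constants : n ^ 2 + 4 * n + 8 =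
      ∑ k ∈ range (n + 1), k + (∑ k ∈ range (n + 1), (k + 3) + 5) := by
    have gauss := sum_range_id_mul_two (n + 1)
    simp only [sum_add_distrib, sum_const, card_range, smul_eq_mul]
    grind
  have with_zero := sum_antidiagonal_sum_sum_choose_succ_add_eq_fib n
  simp only [split_off_zero, sum_add_distrib, sum_antidiagonal_snd] at with_zero constants
  lia

end BinomialSums

section Continuations

/-- The relation between consecutive rows `p`, `q` of an admissible matrix. -/
def RowStep (p q : ℕ × ℕ) : Prop := q.1 < p.1 ∧ p.1 + p.2 < q.1 + q.2

instance : IsTrans (ℕ × ℕ) RowStep :=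
  ⟨fun _ _ _ hpq hqr ↦ ⟨hqr.1.trans hpq.1, hpq.2.trans hqr.2⟩⟩

lemma RowStep.snd_add_two_le {p q : ℕ × ℕ} (h : RowStep p q) : p.2 + 2 ≤ q.2 := by
  obtain ⟨hfst, hsum⟩ := h
  lia

/-- The lists of rows, possibly empty, that can follow the row `p` in an admissible matrix with
second column bounded by `b`. The row `p` itself is not required to satisfy the bound. -/
def continuations (b : ℕ) (p : ℕ × ℕ) : Set (List (ℕ × ℕ)) :=
  {t | (p :: t).IsChain RowStep ∧ ∀ q ∈ t, q.2 ≤ b}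

variable {b m μ : ℕ} {p q : ℕ × ℕ} {t : List (ℕ × ℕ)}

lemma nil_mem_continuations : [] ∈ continuations b p := by simp [continuations]

lemma cons_mem_continuations :
    q :: t ∈ continuations b p ↔ RowStep p q ∧ q.2 ≤ b ∧ t ∈ continuations b q := by
  simp only [continuations, Set.mem_ofPred_eq, List.isChain_cons_cons, List.forall_mem_cons]
  tauto

lemma fst_lt_of_mem_continuations (ht : t ∈ continuations b p) (hq : q ∈ t) : q.1 < p.1 :=
  (ht.1.rel_cons hq).1

lemma continuations_eq_singleton_nil (h : ∀ q, RowStep p q → b < q.2) :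
    continuations b p = {[]} := by
  ext t
  cases t with
  | nil => simp [nil_mem_continuations]
  | cons q t => simpa [cons_mem_continuations] using fun hpq hqb ↦ absurd hqb (h q hpq).not_ge

lemma continuations_zero : continuations b (0, μ) = {[]} :=
  continuations_eq_singleton_nil fun _ h ↦ absurd h.1 (Nat.not_lt_zero _)

lemma continuations_of_le (h : b ≤ μ + 1) : continuations b (m, μ) = {[]} :=
  continuations_eq_singleton_nil fun _ hq ↦ h.trans_lt hq.snd_add_two_le

-- The first row of a continuation of `(m + 1, μ)` either has first entry `m`, or it satisfies the
-- same conditions as after `(m, μ + 1)`, which has the same row sum as `(m + 1, μ)`.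
lemma continuations_succ : continuations b (m + 1, μ) =
    continuations b (m, μ + 1) ∪
      ⋃ ν ∈ Icc (μ + 2) b, List.cons (m, ν) '' continuations b (m, ν) := by
  ext t
  cases t with
  | nil => simp [nil_mem_continuations]
  | cons q t =>
    obtain ⟨x, y⟩ := q
    simp only [Set.mem_union, Set.mem_iUnion, Set.mem_image, List.cons.injEq, Prod.mk.injEq,
      cons_mem_continuations, RowStep, mem_Icc]
    grind

lemma encard_continuations_succ : (continuations b (m + 1, μ)).encard =
    (continuations b (m, μ + 1)).encard +
      ∑ ν ∈ Icc (μ + 2) b, (continuations b (m, ν)).encard := by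
  have cons_injective2 :
      Function.Injective2 fun (ν : ℕ) (t : List (ℕ × ℕ)) ↦ (m, ν) :: t := by
    intro ν ν' t t' h
    simpa using h
  have disjoint_parts : Disjoint (continuations b (m, μ + 1))
      (⋃ ν ∈ Icc (μ + 2) b, List.cons (m, ν) '' continuations b (m, ν)) := by
    refine Set.disjoint_iUnion₂_right.2 fun ν _ ↦ Set.disjoint_right.2 ?_
    rintro _ ⟨t, -, rfl⟩ ht
    exact (cons_mem_continuations.1 ht).1.1.false
  rw [continuations_succ, Set.encard_union_eq disjoint_parts,
    encard_biUnion_image_of_injective2 cons_injective2]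

lemma encard_continuations_pascal (h : μ + 2 ≤ b) : (continuations b (m + 1, μ)).encard =
    (continuations b (m, μ + 1)).encard + (continuations b (m + 1, μ + 1)).encard := by
  rw [encard_continuations_succ, encard_continuations_succ (μ := μ + 1),
    ← add_sum_Ioc_eq_sum_Icc h, ← Icc_add_one_left_eq_Ioc, add_right_comm μ 2 1]

-- For `b ≤ μ` truncated subtraction makes the sum `1`, which counts the empty continuation.
lemma encard_continuations (b m μ : ℕ) :
    (continuations b (m, μ)).encard = (∑ i ∈ range (m + 1), (b - 1 - μ).choose i : ℕ) := by
  induction hk : b - 1 - μ generalizing m μ with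
  | zero =>
    rw [continuations_of_le (by lia), Set.encard_singleton, sum_range_zero_choose, Nat.cast_one]
  | succ k ih =>
    cases m with
    | zero => simp [continuations_zero]
    | succ m =>
      rw [encard_continuations_pascal (by lia), ih _ _ (by lia), ih _ _ (by lia),
        sum_range_succ_choose, Nat.cast_add]

end Continuations

section Games

lemma cons_mem_Gset {a b : ℕ} {p : ℕ × ℕ} {t : List (ℕ × ℕ)} :
    p :: t ∈ Gset a b ↔ (1 ≤ p.1 ∧ p.1 ≤ a) ∧ p.2 < b ∧ t ∈ continuations b p := by
  constructor
  · rintro ⟨⟨-, chain⟩, bounds, ⟨_, ⟨⟩, pos⟩, single⟩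
    obtain ⟨⟨hpa, -⟩, tail_bounds⟩ := List.forall_mem_cons.1 bounds
    refine ⟨⟨pos, hpa⟩, ?_, chain, fun q hq ↦ (tail_bounds q hq).2⟩
    cases t with
    | nil => simpa using single
    | cons q t =>
      have second_row_large := RowStep.snd_add_two_le (List.isChain_cons_cons.1 chain).1
      have second_row_bound := (tail_bounds q List.mem_cons_self).2
      lia
  · rintro ⟨⟨pos, hpa⟩, hpb, ht⟩
    refine ⟨⟨List.cons_ne_nil p t, ht.1⟩, ?_, ⟨p, rfl, pos⟩, fun _ ↦ ⟨p, rfl, hpb⟩⟩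
    exact List.forall_mem_cons.2 ⟨⟨hpa, hpb.le⟩, fun q hq ↦
      ⟨(fst_lt_of_mem_continuations ht hq).le.trans hpa, ht.2 q hq⟩⟩

lemma Gset_eq_biUnion (a b : ℕ) :
    Gset a b = ⋃ p ∈ Icc 1 a ×ˢ range b, List.cons p '' continuations b p := by
  ext M
  cases M with
  | nil => simp [Gset, Admissible]
  | cons p t =>
    simp only [cons_mem_Gset, Set.mem_iUnion, Set.mem_image, mem_product, mem_Icc, mem_range,
      List.cons.injEq]
    grind

lemma encard_Gset (a b : ℕ) :
    (Gset a b).encard = (∑ m ∈ Icc 1 a, ∑ i ∈ range (m + 1), b.choose (i + 1) : ℕ) := by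
  have sum_over_second_entry (m : ℕ) :
      ∑ μ ∈ range b, ∑ i ∈ range (m + 1), (b - 1 - μ).choose i =
        ∑ i ∈ range (m + 1), b.choose (i + 1) := by
    rw [sum_range_reflect (fun k ↦ ∑ i ∈ range (m + 1), k.choose i), sum_comm]
    simp only [sum_range_choose_eq_choose_succ]
  rw [Gset_eq_biUnion, encard_biUnion_image_of_injective2 fun _ _ _ _ ↦ List.cons.inj, sum_product]
  simp only [encard_continuations, ← Nat.cast_sum, sum_over_second_entry]

-- The values `a = 0` and `a = n`, excluded from `Hset n`, contribute nothing.
lemma Hset_eq_biUnion (n : ℕ) :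
    Hset n = ⋃ a ∈ range (n + 1), Prod.mk a '' Gset a (n - a) := by
  ext ⟨a, M⟩
  have interior (hM : M ∈ Gset a (n - a)) : 1 ≤ a ∧ a ≤ n - 1 := by
    rw [Gset_eq_biUnion] at hM
    simp only [Set.mem_iUnion, mem_product, mem_Icc, mem_range] at hM
    obtain ⟨p, hp, -⟩ := hM
    lia
  simp only [Hset, Set.mem_ofPred_eq, Set.mem_iUnion, Set.mem_image, mem_range, Prod.mk.injEq]
  grind

lemma encard_Hset (n : ℕ) : (Hset n).encard =
    (∑ x ∈ antidiagonal n, ∑ m ∈ Icc 1 x.1, ∑ i ∈ range (m + 1), x.2.choose (i + 1) : ℕ) := by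
  rw [Hset_eq_biUnion, encard_biUnion_image_of_injective2 fun _ _ _ _ ↦ Prod.mk.inj,
    Nat.sum_antidiagonal_eq_sum_range_succ_mk]
  simp only [encard_Gset, Nat.cast_sum]

end Games

/-- The number of complete simple games with `n` voters of exactly two
different types, up to isomorphism, is `F(n+6) - (n² + 4n + 8)`. -/
theorem count_complete_games_two_types (n : ℕ) :
    (Hset n).ncard = Nat.fib (n + 6) - (n ^ 2 + 4 * n + 8) := by
  rw [Set.ncard, encard_Hset, ENat.toNat_natCast]
  exact Nat.eq_sub_of_add_eq (sum_antidiagonal_sum_Icc_sum_choose_succ_add_eq_fib n)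
end

section
/- Let a, s, b be natural numbers with a ≤ s and s + 2 ≤ a + b. Then N(a,s,b) = Σ_{k=0}^{a−1} C(a + b − 2 − s, k), where C denotes the binomial coefficient. -/
/-- The set of admissible lists counted by `N(a,s,b)`: the first row is
`(a, s - a)` (i.e. `m₁ = a` and `m₁ + μ₁ = s`) and the last row has second
component `b`. -/
def Nset (a s b : ℕ) : Set (List (ℕ × ℕ)) :=
  {M | Admissible M ∧
       (∃ p, M.head? = some p ∧ p.1 = a ∧ p.1 + p.2 = s) ∧
       (∃ q, M.getLast? = some q ∧ q.2 = b)}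

/-!
Call a row *allowed* if its first entry is `< a` and its sum is `> s`, and let `W(a, s)` count the
admissible lists that start at an allowed row and end in a row `(_, b)`. Removing the first row
gives `N(a, s, b) = W(a, s)` unless `s = a + b`. A row allowed for `(a + 1, s)` is allowed for
`(a, s)`, or for `(a + 1, s + 1)`, or is the corner row with first entry `a` and sum `s + 1`. The
lists starting at the corner number `N(a, s + 1, b) = W(a, s + 1)`, which is exactly what the
overlap of the first two cases counts twice. Hence `W(a + 1, s) = W(a, s) + W(a + 1, s + 1)`, and
partial row sums of Pascal's triangle satisfy the same recursion in `n = a + b - 2 - s`.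
-/

open Finset (range)

theorem sum_range_succ_choose_succ (a n : ℕ) :
    ∑ k ∈ range (a + 1), (n + 1).choose k =
      ∑ k ∈ range a, n.choose k + ∑ k ∈ range (a + 1), n.choose k := by
  rw [Finset.sum_range_succ', Finset.sum_range_succ' n.choose]
  simp only [Nat.choose_succ_succ', Finset.sum_add_distrib, Nat.choose_zero_right, add_assoc]

theorem admissible_singleton (p : ℕ × ℕ) : Admissible [p] :=
  ⟨List.cons_ne_nil p [], List.isChain_singleton p⟩

theorem admissible_cons_cons {p q : ℕ × ℕ} {l : List (ℕ × ℕ)} :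
    Admissible (p :: q :: l) ↔
      (q.1 < p.1 ∧ p.1 + p.2 < q.1 + q.2) ∧ Admissible (q :: l) := by
  simp only [Admissible, ne_eq, reduceCtorEq, not_false_eq_true, true_and]
  exact List.isChain_cons_cons

/-- The rows that may follow a row with first entry `a` and sum `s` in an admissible list. -/
def nextRows (a s : ℕ) : Set (ℕ × ℕ) :=
  {p | p.1 < a ∧ s < p.1 + p.2}

/-- The admissible lists whose first row lies in `S` and whose last row has second entry `b`. A set
of first rows is allowed so that decompositions of `S` carry over to the lists. -/
def admissibleFrom (S : Set (ℕ × ℕ)) (b : ℕ) : Set (List (ℕ × ℕ)) :=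
  {M | Admissible M ∧ (∃ p, M.head? = some p ∧ p ∈ S) ∧ ∃ q, M.getLast? = some q ∧ q.2 = b}

section nextRows

variable {a s : ℕ}

theorem mem_nextRows {p : ℕ × ℕ} : p ∈ nextRows a s ↔ p.1 < a ∧ s < p.1 + p.2 :=
  Iff.rfl

theorem nextRows_zero (s : ℕ) : nextRows 0 s = ∅ := by
  simp [nextRows]

theorem nextRows_inter_nextRows_succ_succ (a s : ℕ) :
    nextRows a s ∩ nextRows (a + 1) (s + 1) = nextRows a (s + 1) := by
  ext p
  simp only [Set.mem_inter_iff, mem_nextRows]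
  omega

theorem nextRows_succ (h : a ≤ s + 1) :
    nextRows (a + 1) s = nextRows a s ∪ nextRows (a + 1) (s + 1) ∪ {(a, s + 1 - a)} := by
  ext p
  simp only [Set.mem_union, Set.mem_singleton_iff, mem_nextRows, Prod.ext_iff]
  omega

end nextRows

section admissibleFrom

variable {S T : Set (ℕ × ℕ)} {a s b : ℕ} {p : ℕ × ℕ} {l : List (ℕ × ℕ)}

theorem nil_notMem_admissibleFrom : [] ∉ admissibleFrom S b :=
  fun h => h.1.1 rfl

theorem cons_mem_admissibleFrom :
    p :: l ∈ admissibleFrom S b ↔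
      p ∈ S ∧ (l = [] ∧ p.2 = b ∨ l ∈ admissibleFrom (nextRows p.1 (p.1 + p.2)) b) := by
  cases l with
  | nil => simp [admissibleFrom, admissible_singleton, -Prod.exists]
  | cons q l =>
    simp only [admissibleFrom, Set.mem_ofPred_eq, admissible_cons_cons, mem_nextRows,
      List.head?_cons, List.getLast?_cons_cons, Option.some.injEq, exists_eq_left',
      reduceCtorEq, false_and, false_or]
    tauto

theorem admissibleFrom_empty (b : ℕ) : admissibleFrom ∅ b = ∅ := by
  simp [admissibleFrom]

theorem admissibleFrom_union (S T : Set (ℕ × ℕ)) (b : ℕ) :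
    admissibleFrom (S ∪ T) b = admissibleFrom S b ∪ admissibleFrom T b := by
  ext (_ | ⟨p, l⟩)
  · simp [nil_notMem_admissibleFrom]
  · simp only [Set.mem_union, cons_mem_admissibleFrom, or_and_right]

theorem admissibleFrom_inter (S T : Set (ℕ × ℕ)) (b : ℕ) :
    admissibleFrom (S ∩ T) b = admissibleFrom S b ∩ admissibleFrom T b := by
  ext (_ | ⟨p, l⟩)
  · simp [nil_notMem_admissibleFrom]
  · simp only [Set.mem_inter_iff, cons_mem_admissibleFrom]
    tauto

theorem disjoint_admissibleFrom (h : Disjoint S T) (b : ℕ) :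
    Disjoint (admissibleFrom S b) (admissibleFrom T b) := by
  rw [Set.disjoint_iff_inter_eq_empty] at h ⊢
  rw [← admissibleFrom_inter, h, admissibleFrom_empty]

theorem snd_le_of_cons_mem_admissibleFrom (h : p :: l ∈ admissibleFrom S b) : p.2 ≤ b := by
  induction l generalizing p S with
  | nil =>
    obtain ⟨-, ⟨-, hp⟩ | hnil⟩ := cons_mem_admissibleFrom.1 h
    · exact hp.le
    · exact absurd hnil nil_notMem_admissibleFrom
  | cons q l ih =>
    obtain ⟨-, ⟨hnil, -⟩ | hq⟩ := cons_mem_admissibleFrom.1 h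
    · exact absurd hnil (List.cons_ne_nil q l)
    · have hqb : q.2 ≤ b := ih hq
      have hpq : q ∈ nextRows p.1 (p.1 + p.2) := (cons_mem_admissibleFrom.1 hq).1
      rw [mem_nextRows] at hpq
      omega

theorem admissibleFrom_eq_empty (h : ∀ p ∈ S, b < p.2) : admissibleFrom S b = ∅ := by
  refine Set.eq_empty_of_forall_notMem ?_
  rintro (_ | ⟨p, l⟩) hM
  · exact nil_notMem_admissibleFrom hM
  · exact (h p (cons_mem_admissibleFrom.1 hM).1).not_ge (snd_le_of_cons_mem_admissibleFrom hM)

theorem admissibleFrom_nextRows_eq_empty (h : a + b ≤ s + 1) :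
    admissibleFrom (nextRows a s) b = ∅ := by
  refine admissibleFrom_eq_empty fun p hp => ?_
  rw [mem_nextRows] at hp
  omega

theorem admissibleFrom_singleton_self (a b : ℕ) : admissibleFrom {(a, b)} b = {[(a, b)]} := by
  have hnext : admissibleFrom (nextRows a (a + b)) b = ∅ :=
    admissibleFrom_nextRows_eq_empty (Nat.le_succ _)
  ext (_ | ⟨p, l⟩)
  · simp [nil_notMem_admissibleFrom]
  · rw [cons_mem_admissibleFrom, Set.mem_singleton_iff, Set.mem_singleton_iff, List.cons.injEq]
    refine and_congr_right ?_
    rintro rfl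
    simp [hnext]

theorem admissibleFrom_singleton (h : p.2 ≠ b) :
    admissibleFrom {p} b = List.cons p '' admissibleFrom (nextRows p.1 (p.1 + p.2)) b := by
  ext (_ | ⟨q, l⟩)
  · simp [nil_notMem_admissibleFrom]
  · rw [cons_mem_admissibleFrom, Set.mem_singleton_iff]
    constructor
    · rintro ⟨rfl, ⟨-, hb⟩ | hl⟩
      · exact absurd hb h
      · exact Set.mem_image_of_mem _ hl
    · rintro ⟨l', hl', heq⟩
      obtain ⟨rfl, rfl⟩ := List.cons.inj heq
      exact ⟨rfl, Or.inr hl'⟩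

theorem encard_admissibleFrom_singleton (has : a ≤ s) (hs : s ≠ a + b) :
    (admissibleFrom {(a, s - a)} b).encard = (admissibleFrom (nextRows a s) b).encard := by
  have hb : s - a ≠ b := by omega
  rw [admissibleFrom_singleton hb, List.cons_injective.encard_image, Nat.add_sub_cancel' has]

theorem encard_admissibleFrom_nextRows_succ (has : a ≤ s + 1) (hs : s + 1 ≠ a + b) :
    (admissibleFrom (nextRows (a + 1) s) b).encard =
      (admissibleFrom (nextRows a s) b).encard +
        (admissibleFrom (nextRows (a + 1) (s + 1)) b).encard := by
  have hcorner : Disjoint (nextRows a s ∪ nextRows (a + 1) (s + 1)) {(a, s + 1 - a)} := by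
    simp only [Set.disjoint_singleton_right, Set.mem_union, mem_nextRows]
    omega
  rw [nextRows_succ has, admissibleFrom_union,
    Set.encard_union_eq (disjoint_admissibleFrom hcorner b),
    encard_admissibleFrom_singleton has hs, admissibleFrom_union,
    ← nextRows_inter_nextRows_succ_succ a s, admissibleFrom_inter,
    Set.encard_union_add_encard_inter]

theorem encard_admissibleFrom_nextRows_eq_one (has : a ≤ s + 1) (hs : s + 1 = a + b) :
    (admissibleFrom (nextRows (a + 1) s) b).encard = 1 := by
  rw [nextRows_succ has, admissibleFrom_union, admissibleFrom_union,
    admissibleFrom_nextRows_eq_empty (by omega), admissibleFrom_nextRows_eq_empty (by omega),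
    Set.empty_union, Set.empty_union, hs, Nat.add_sub_cancel_left, admissibleFrom_singleton_self,
    Set.encard_singleton]

theorem encard_admissibleFrom_nextRows {n : ℕ} (has : a ≤ s + 1) (hn : s + 2 + n = a + b) :
    (admissibleFrom (nextRows a s) b).encard = (∑ k ∈ range a, n.choose k : ℕ) := by
  induction n generalizing a s with
  | zero =>
    cases a with
    | zero => simp [nextRows_zero, admissibleFrom_empty]
    | succ a =>
      rw [encard_admissibleFrom_nextRows_eq_one (by omega) (by omega), Finset.sum_range_succ']
      simp
  | succ n ih =>
    cases a with
    | zero => simp [nextRows_zero, admissibleFrom_empty]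
    | succ a =>
      rw [encard_admissibleFrom_nextRows_succ (by omega) (by omega), ih (by omega) (by omega),
        ih (by omega) (by omega), sum_range_succ_choose_succ, Nat.cast_add]

theorem Nset_eq_admissibleFrom (has : a ≤ s) : Nset a s b = admissibleFrom {(a, s - a)} b := by
  have hfirst (p : ℕ × ℕ) : p.1 = a ∧ p.1 + p.2 = s ↔ p = (a, s - a) := by
    rw [Prod.ext_iff]
    omega
  simp only [Nset, admissibleFrom, hfirst, Set.mem_singleton_iff]

end admissibleFrom

/-- If `a ≤ s` and `s + 2 ≤ a + b` (i.e. `s - a < b`, excluding the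
degenerate `s + 1 = a + b` case), then
`N(a,s,b) = ∑_{k=0}^{a-1} C(a + b - 2 - s, k)`. -/
theorem Ncount_eq_sum_choose (a s b : ℕ) (has : a ≤ s) (hs : s + 2 ≤ a + b) :
    (Nset a s b).ncard = ∑ k ∈ Finset.range a, Nat.choose (a + b - 2 - s) k := by
  rw [Set.ncard_def, Nset_eq_admissibleFrom has,
    encard_admissibleFrom_singleton has (by omega),
    encard_admissibleFrom_nextRows (n := a + b - 2 - s) (by omega) (by omega), ENat.toNat_natCast]
end

section
/- Let a, s, b be natural numbers with a ≤ s and s + 1 = a + b. Then N(a,s,b) = 0. -/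
theorem add_two_le_of_lt_of_add_lt_add {m μ n ν : ℕ} (hfst : n < m) (hsum : m + μ < n + ν) :
    μ + 2 ≤ ν := by
  omega

theorem Admissible.snd_eq_or_add_two_le {M : List (ℕ × ℕ)} (hM : Admissible M) {p q : ℕ × ℕ}
    (hp : M.head? = some p) (hq : q ∈ M) : q.2 = p.2 ∨ p.2 + 2 ≤ q.2 := by
  refine hM.2.induction (fun x ↦ x.2 = p.2 ∨ p.2 + 2 ≤ x.2) M ?_ ?_ q hq
  · rintro x y ⟨hfst, hsum⟩ hx
    have hstep : x.2 + 2 ≤ y.2 := add_two_le_of_lt_of_add_lt_add hfst hsum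
    omega
  · intro hne
    have hhead : M.head hne = p := (List.head_eq_iff_head?_eq_some hne).2 hp
    exact Or.inl (congrArg Prod.snd hhead)

theorem add_eq_or_add_two_le_of_mem_Nset {a s b : ℕ} {M : List (ℕ × ℕ)} (hM : M ∈ Nset a s b) :
    a + b = s ∨ s + 2 ≤ a + b := by
  obtain ⟨hadm, ⟨p, hp, rfl, rfl⟩, ⟨q, hq, rfl⟩⟩ := hM
  have hgap : q.2 = p.2 ∨ p.2 + 2 ≤ q.2 :=
    hadm.snd_eq_or_add_two_le hp (List.mem_of_getLast? hq)
  omega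

/-- If `a ≤ s` and `s + 1 = a + b` then `N(a,s,b) = 0`. -/
theorem Ncount_eq_zero_of_succ_eq (a s b : ℕ) (has : a ≤ s) (h : s + 1 = a + b) :
    (Nset a s b).ncard = 0 := by
  have hempty : Nset a s b = ∅ := by
    refine Set.eq_empty_of_forall_notMem fun M hM ↦ ?_
    have hgap : a + b = s ∨ s + 2 ≤ a + b := add_eq_or_add_two_le_of_mem_Nset hM
    omega
  rw [hempty, Set.ncard_empty]
end

section
/- For all natural numbers a and b, the number of admissible lists M = [(m_1,μ_1),…,(m_r,μ_r)] with m_1 ≤ a and μ_r ≤ b equals Σ_{i=0}^{a} Σ_{k=0}^{i−1} C(b, k+2) + (a+1)(b+1). -/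
/-!
An admissible list is determined by the set `A` of its first components and the set `S` of its row
sums, and the pairs that occur are those with `#A = #S > 0` and `max A ≤ min S`. If `A` has
maximum `i` and minimum `j`, the condition `μ_r ≤ b` says that `S ⊆ [i, j + b]`. For `i = j` this
leaves `b + 1` choices. For `j < i`, exchanging `A` for its complement in `[j, i]`, which is
disjoint from `S`, turns `(A, S)` into an arbitrary subset of size `i - j + 1` of the `b`-element
interval `(j, j + b]`. Summing `C(b, i - j + 1)` over `j < i ≤ a` gives the double sum, with
`k = i - j - 1`.
-/

open Finset

/-- The set of first components of a two-column matrix; the order of the rows is forgotten, since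
admissibility restores it. -/
def firstColumn (M : List (ℕ × ℕ)) : Finset ℕ :=
  (M.map Prod.fst).toFinset

/-- The set of row sums of a two-column matrix, which together with `firstColumn` encodes an
admissible matrix. -/
def rowSums (M : List (ℕ × ℕ)) : Finset ℕ :=
  (M.map fun p ↦ p.1 + p.2).toFinset

/-- The two-column matrix with first column `A` in decreasing order and row sums `S` in increasing
order. It is meaningful when `#A = #S` and every element of `A` is at most every element of `S`, so
that neither the zip nor the subtraction truncates. -/
def matrixOf (A S : Finset ℕ) : List (ℕ × ℕ) :=
  ((A.sort (· ≥ ·)).zip S.sort).map fun p ↦ (p.1, p.2 - p.1)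

theorem fst_mem_firstColumn {M : List (ℕ × ℕ)} {p : ℕ × ℕ} (hp : p ∈ M) : p.1 ∈ firstColumn M :=
  List.mem_toFinset.2 (List.mem_map_of_mem hp)

theorem sum_mem_rowSums {M : List (ℕ × ℕ)} {p : ℕ × ℕ} (hp : p ∈ M) : p.1 + p.2 ∈ rowSums M :=
  List.mem_toFinset.2 (List.mem_map_of_mem (f := fun p ↦ p.1 + p.2) hp)

theorem admissible_iff_sorted {M : List (ℕ × ℕ)} :
    Admissible M ↔
      M ≠ [] ∧ (M.map Prod.fst).SortedGT ∧ (M.map fun p ↦ p.1 + p.2).SortedLT := by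
  let r (p q : ℕ × ℕ) : Prop := q.1 < p.1 ∧ p.1 + p.2 < q.1 + q.2
  have : Trans r r r := ⟨fun hpq hqr ↦ ⟨hqr.1.trans hpq.1, hpq.2.trans hqr.2⟩⟩
  refine and_congr_right' ((List.isChain_iff_pairwise (R := r)).trans ?_)
  rw [List.pairwise_and_iff, List.sortedGT_iff_pairwise, List.sortedLT_iff_pairwise,
    List.pairwise_map, List.pairwise_map]

section ListExtremes

variable {α : Type*} {r : α → α → Prop} [Std.Refl r] {l : List α} {x y : α}

theorem rel_of_pairwise_of_head?_eq_some (hl : l.Pairwise r) (hx : l.head? = some x) (hy : y ∈ l) :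
    r x y := by
  obtain ⟨t, rfl⟩ := List.head?_eq_some_iff.1 hx
  rcases List.mem_cons.1 hy with rfl | hy
  · exact Std.Refl.refl _
  · exact List.rel_of_pairwise_cons hl hy

theorem rel_of_pairwise_of_getLast?_eq_some (hl : l.Pairwise r) (hx : l.getLast? = some x)
    (hy : y ∈ l) : r y x := by
  obtain ⟨t, rfl⟩ := List.getLast?_eq_some_iff.1 hx
  rcases List.mem_append.1 hy with hy | hy
  · exact (List.pairwise_append.1 hl).2.2 y hy x (List.mem_singleton_self x)
  · exact List.mem_singleton.1 hy ▸ Std.Refl.refl _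

end ListExtremes

namespace Admissible

variable {M : List (ℕ × ℕ)} {p : ℕ × ℕ}

theorem card_firstColumn_eq_card_rowSums (hM : Admissible M) : #(firstColumn M) = #(rowSums M) := by
  obtain ⟨-, hfst, hsum⟩ := admissible_iff_sorted.1 hM
  rw [firstColumn, rowSums, List.toFinset_card_of_nodup hfst.nodup,
    List.toFinset_card_of_nodup hsum.nodup, List.length_map, List.length_map]

theorem matrixOf_firstColumn_rowSums (hM : Admissible M) :
    matrixOf (firstColumn M) (rowSums M) = M := by
  obtain ⟨-, hfst, hsum⟩ := admissible_iff_sorted.1 hM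
  rw [matrixOf, firstColumn, rowSums,
    (List.toFinset_sort (· ≥ ·) hfst.nodup).2 hfst.sortedGE.pairwise,
    (List.toFinset_sort (· ≤ ·) hsum.nodup).2 hsum.sortedLE.pairwise, List.zip_map', List.map_map]
  exact (List.map_congr_left fun p _ ↦ by simp).trans M.map_id

theorem isGreatest_firstColumn_head (hM : Admissible M) (hp : M.head? = some p) :
    IsGreatest (firstColumn M : Set ℕ) p.1 := by
  obtain ⟨-, hfst, -⟩ := admissible_iff_sorted.1 hM
  refine ⟨fst_mem_firstColumn (List.mem_of_head? hp), fun x hx ↦ ?_⟩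
  exact rel_of_pairwise_of_head?_eq_some (r := (· ≥ ·)) hfst.sortedGE.pairwise
    (by rw [List.head?_map, hp, Option.map_some]) (List.mem_toFinset.1 hx)

theorem isLeast_rowSums_head (hM : Admissible M) (hp : M.head? = some p) :
    IsLeast (rowSums M : Set ℕ) (p.1 + p.2) := by
  obtain ⟨-, -, hsum⟩ := admissible_iff_sorted.1 hM
  refine ⟨sum_mem_rowSums (List.mem_of_head? hp), fun x hx ↦ ?_⟩
  exact rel_of_pairwise_of_head?_eq_some (r := (· ≤ ·)) hsum.sortedLE.pairwise
    (by rw [List.head?_map, hp, Option.map_some]) (List.mem_toFinset.1 hx)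

theorem isLeast_firstColumn_getLast (hM : Admissible M) (hp : M.getLast? = some p) :
    IsLeast (firstColumn M : Set ℕ) p.1 := by
  obtain ⟨-, hfst, -⟩ := admissible_iff_sorted.1 hM
  refine ⟨fst_mem_firstColumn (List.mem_of_getLast? hp), fun x hx ↦ ?_⟩
  exact rel_of_pairwise_of_getLast?_eq_some (r := (· ≥ ·)) hfst.sortedGE.pairwise
    (by rw [List.getLast?_map, hp, Option.map_some]) (List.mem_toFinset.1 hx)

theorem isGreatest_rowSums_getLast (hM : Admissible M) (hp : M.getLast? = some p) :
    IsGreatest (rowSums M : Set ℕ) (p.1 + p.2) := by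
  obtain ⟨-, -, hsum⟩ := admissible_iff_sorted.1 hM
  refine ⟨sum_mem_rowSums (List.mem_of_getLast? hp), fun x hx ↦ ?_⟩
  exact rel_of_pairwise_of_getLast?_eq_some (r := (· ≤ ·)) hsum.sortedLE.pairwise
    (by rw [List.getLast?_map, hp, Option.map_some]) (List.mem_toFinset.1 hx)

end Admissible

section MatrixOf

variable {A S : Finset ℕ}

theorem map_fst_matrixOf (hcard : #A = #S) : (matrixOf A S).map Prod.fst = A.sort (· ≥ ·) := by
  rw [matrixOf, List.map_map]
  exact List.map_fst_zip (by rw [length_sort, length_sort, hcard])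

theorem map_sum_matrixOf (hcard : #A = #S) (hle : ∀ m ∈ A, ∀ s ∈ S, m ≤ s) :
    ((matrixOf A S).map fun p ↦ p.1 + p.2) = S.sort := by
  rw [matrixOf, List.map_map]
  refine (List.map_congr_left (g := Prod.snd) fun p hp ↦ ?_).trans (List.map_snd_zip ?_)
  · obtain ⟨hm, hs⟩ := List.of_mem_zip hp
    exact Nat.add_sub_cancel' (hle _ ((mem_sort _).1 hm) _ ((mem_sort _).1 hs))
  · rw [length_sort, length_sort, hcard]

theorem firstColumn_matrixOf (hcard : #A = #S) : firstColumn (matrixOf A S) = A := by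
  rw [firstColumn, map_fst_matrixOf hcard, sort_toFinset]

theorem rowSums_matrixOf (hcard : #A = #S) (hle : ∀ m ∈ A, ∀ s ∈ S, m ≤ s) :
    rowSums (matrixOf A S) = S := by
  rw [rowSums, map_sum_matrixOf hcard hle, sort_toFinset]

theorem admissible_matrixOf (hA : A.Nonempty) (hcard : #A = #S)
    (hle : ∀ m ∈ A, ∀ s ∈ S, m ≤ s) : Admissible (matrixOf A S) := by
  refine admissible_iff_sorted.2 ⟨fun hnil ↦ hA.ne_empty ?_, ?_, ?_⟩
  · rw [← firstColumn_matrixOf hcard, hnil, firstColumn, List.map_nil, List.toFinset_nil]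
  · rw [map_fst_matrixOf hcard]
    exact A.sortedGT_sort
  · rw [map_sum_matrixOf hcard hle]
    exact S.sortedLT_sort

end MatrixOf

/-- The pairs `(A, S)` of equinumerous sets with `max A = i`, `min A = j` and `S ⊆ [i, j + b]`.
They encode the admissible lists with `m_1 = i`, `m_r = j` and `μ_r ≤ b`. -/
def spanningPairs (b i j : ℕ) : Finset (Finset ℕ × Finset ℕ) :=
  {P ∈ (Icc j i).powerset ×ˢ (Icc i (j + b)).powerset | i ∈ P.1 ∧ j ∈ P.1 ∧ #P.1 = #P.2}

theorem mem_spanningPairs {b i j : ℕ} {P : Finset ℕ × Finset ℕ} :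
    P ∈ spanningPairs b i j ↔
      (P.1 ⊆ Icc j i ∧ P.2 ⊆ Icc i (j + b)) ∧ i ∈ P.1 ∧ j ∈ P.1 ∧ #P.1 = #P.2 := by
  simp only [spanningPairs, mem_filter, mem_product, mem_powerset]

section SpanningPairs

variable {b i j : ℕ} {P : Finset ℕ × Finset ℕ}

theorem le_of_mem_spanningPairs (hP : P ∈ spanningPairs b i j) :
    ∀ m ∈ P.1, ∀ s ∈ P.2, m ≤ s := by
  obtain ⟨⟨hA, hS⟩, -⟩ := mem_spanningPairs.1 hP
  exact fun m hm s hs ↦ (mem_Icc.1 (hA hm)).2.trans (mem_Icc.1 (hS hs)).1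

theorem Admissible.firstColumn_rowSums_mem_spanningPairs {M : List (ℕ × ℕ)} {p q : ℕ × ℕ}
    (hM : Admissible M) (hp : M.head? = some p) (hq : M.getLast? = some q) (hb : q.2 ≤ b) :
    (firstColumn M, rowSums M) ∈ spanningPairs b p.1 q.1 := by
  have hmax := hM.isGreatest_firstColumn_head hp
  have hmin := hM.isLeast_firstColumn_getLast hq
  refine mem_spanningPairs.2 ⟨⟨fun m hm ↦ ?_, fun s hs ↦ ?_⟩, hmax.1, hmin.1,
    hM.card_firstColumn_eq_card_rowSums⟩
  · exact mem_Icc.2 ⟨hmin.2 hm, hmax.2 hm⟩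
  · have hlow := (hM.isLeast_rowSums_head hp).2 hs
    have hupp := (hM.isGreatest_rowSums_getLast hq).2 hs
    exact mem_Icc.2 ⟨by omega, by omega⟩

theorem fst_le_and_snd_le_of_mem_matrixOf {p : ℕ × ℕ} (hP : P ∈ spanningPairs b i j)
    (hp : p ∈ matrixOf P.1 P.2) : p.1 ≤ i ∧ p.2 ≤ b := by
  obtain ⟨⟨hA, hS⟩, -, -, hcard⟩ := mem_spanningPairs.1 hP
  have hfst : p.1 ∈ P.1 := firstColumn_matrixOf hcard ▸ fst_mem_firstColumn hp
  have hsum : p.1 + p.2 ∈ P.2 :=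
    rowSums_matrixOf hcard (le_of_mem_spanningPairs hP) ▸ sum_mem_rowSums hp
  have hfst_bounds := mem_Icc.1 (hA hfst)
  have hsum_bounds := mem_Icc.1 (hS hsum)
  omega

theorem pairwise_disjoint_spanningPairs (b : ℕ) :
    Pairwise fun x y : Σ _ : ℕ, ℕ ↦
      Disjoint (spanningPairs b x.1 x.2) (spanningPairs b y.1 y.2) := by
  rintro ⟨i, j⟩ ⟨i', j'⟩ hne
  refine disjoint_left.2 fun P hP hP' ↦ hne ?_
  obtain ⟨⟨hA, -⟩, hi, hj, -⟩ := mem_spanningPairs.1 hP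
  obtain ⟨⟨hA', -⟩, hi', hj', -⟩ := mem_spanningPairs.1 hP'
  obtain rfl : i = i' := le_antisymm (mem_Icc.1 (hA' hi)).2 (mem_Icc.1 (hA hi')).2
  obtain rfl : j = j' := le_antisymm (mem_Icc.1 (hA hj')).1 (mem_Icc.1 (hA' hj)).1
  rfl

theorem card_spanningPairs_self (b i : ℕ) : #(spanningPairs b i i) = b + 1 := by
  have h : spanningPairs b i i = {{i}} ×ˢ powersetCard 1 (Icc i (i + b)) := by
    ext ⟨A, S⟩
    simp only [mem_spanningPairs, mem_product, mem_singleton, mem_powersetCard, Icc_self]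
    constructor
    · rintro ⟨⟨hA, hS⟩, hi, -, hcard⟩
      obtain rfl : A = {i} := hA.antisymm (singleton_subset_iff.2 hi)
      exact ⟨rfl, hS, by rw [← hcard, card_singleton]⟩
    · rintro ⟨rfl, hS, hcard⟩
      simp [hS, hcard]
  rw [h, card_product, card_singleton, card_powersetCard, Nat.card_Icc, Nat.choose_one_right]
  omega

/-- Exchanges the first set of a pair `(A, S)` for its complement in `[j, i]` and merges the two
sets into one, which encodes `spanningPairs b i j` by subsets of an interval. -/
def complMerge (i j : ℕ) (P : Finset ℕ × Finset ℕ) : Finset ℕ :=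
  (Icc j i \ P.1) ∪ P.2

/-- Inverse of `complMerge` on `spanningPairs b i j`. The element `i` is put into the
first set by hand, because `i ∈ T` records that `i` belongs to the second set. -/
def complSplit (i j : ℕ) (T : Finset ℕ) : Finset ℕ × Finset ℕ :=
  (insert i (Ico j i \ T), T \ Ico j i)

theorem complMerge_mem_powersetCard (hji : j < i) (hP : P ∈ spanningPairs b i j) :
    complMerge i j P ∈ powersetCard (i - j + 1) (Ioc j (j + b)) := by
  obtain ⟨⟨hA, hS⟩, hi, hj, hcard⟩ := mem_spanningPairs.1 hP
  have hdisj : Disjoint (Icc j i \ P.1) P.2 := by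
    refine disjoint_left.2 fun x hx hxS ↦ ?_
    have hxi : x = i := le_antisymm (mem_Icc.1 (mem_sdiff.1 hx).1).2 (mem_Icc.1 (hS hxS)).1
    exact (mem_sdiff.1 hx).2 (hxi ▸ hi)
  obtain ⟨s, hs⟩ : P.2.Nonempty := card_pos.1 (hcard ▸ card_pos.2 ⟨i, hi⟩)
  have hs_bounds := mem_Icc.1 (hS hs)
  refine mem_powersetCard.2 ⟨union_subset (fun x hx ↦ ?_) (fun x hx ↦ ?_), ?_⟩
  · obtain ⟨hx, hxA⟩ := mem_sdiff.1 hx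
    have hxj : x ≠ j := fun h ↦ hxA (h ▸ hj)
    rw [mem_Icc] at hx
    exact mem_Ioc.2 ⟨by omega, by omega⟩
  · have hx_bounds := mem_Icc.1 (hS hx)
    exact mem_Ioc.2 ⟨by omega, hx_bounds.2⟩
  · rw [complMerge, card_union_of_disjoint hdisj, ← hcard, card_sdiff_add_card_eq_card hA,
      Nat.card_Icc]
    omega

theorem complSplit_mem_spanningPairs {T : Finset ℕ} (hji : j < i)
    (hT : T ∈ powersetCard (i - j + 1) (Ioc j (j + b))) :
    complSplit i j T ∈ spanningPairs b i j := by
  obtain ⟨hT, hcard⟩ := mem_powersetCard.1 hT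
  have hcard_eq : #(insert i (Ico j i \ T)) = #(T \ Ico j i) := by
    have hgap := card_sdiff_add_card_inter (Ico j i) T
    have hsplit := card_sdiff_add_card_inter T (Ico j i)
    rw [Nat.card_Ico] at hgap
    rw [inter_comm] at hsplit
    rw [card_insert_of_notMem (by simp)]
    omega
  exact mem_spanningPairs.2 ⟨⟨by grind [complSplit], by grind [complSplit]⟩,
    mem_insert_self _ _, by grind [complSplit], hcard_eq⟩

theorem complSplit_complMerge (hP : P ∈ spanningPairs b i j) :
    complSplit i j (complMerge i j P) = P := by
  obtain ⟨⟨hA, hS⟩, hi, -⟩ := mem_spanningPairs.1 hP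
  ext x <;> grind [complSplit, complMerge]

theorem complMerge_complSplit (i j : ℕ) (T : Finset ℕ) :
    complMerge i j (complSplit i j T) = T := by
  ext x
  grind [complSplit, complMerge]

theorem card_spanningPairs_of_lt (hji : j < i) :
    #(spanningPairs b i j) = b.choose (i - j + 1) :=
  calc #(spanningPairs b i j) = #(powersetCard (i - j + 1) (Ioc j (j + b))) :=
        card_nbij' (complMerge i j) (complSplit i j)
          (fun _ hP ↦ complMerge_mem_powersetCard hji hP)
          (fun _ hT ↦ complSplit_mem_spanningPairs hji hT)
          (fun _ hP ↦ complSplit_complMerge hP)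
          (fun T _ ↦ complMerge_complSplit i j T)
    _ = b.choose (i - j + 1) := by rw [card_powersetCard, Nat.card_Ioc, Nat.add_sub_cancel_left]

theorem sum_card_spanningPairs (b i : ℕ) :
    ∑ j ∈ range (i + 1), #(spanningPairs b i j) =
      ∑ k ∈ range i, b.choose (k + 2) + (b + 1) := by
  rw [sum_range_succ, card_spanningPairs_self, ← sum_range_reflect, Nat.add_right_cancel_iff]
  refine sum_congr rfl fun k hk ↦ ?_
  have hki := mem_range.1 hk
  rw [card_spanningPairs_of_lt (by omega), show i - (i - 1 - k) + 1 = k + 2 by omega]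

end SpanningPairs

/-- The pairs `(A, S)` that encode the admissible lists with `m_1 ≤ a` and `μ_r ≤ b`. -/
def columnPairs (a b : ℕ) : Finset (Finset ℕ × Finset ℕ) :=
  ((range (a + 1)).sigma fun i ↦ range (i + 1)).biUnion fun x ↦ spanningPairs b x.1 x.2

theorem mem_columnPairs {a b : ℕ} {P : Finset ℕ × Finset ℕ} :
    P ∈ columnPairs a b ↔ ∃ i ≤ a, ∃ j ≤ i, P ∈ spanningPairs b i j := by
  simp [columnPairs, and_assoc]

theorem card_columnPairs (a b : ℕ) :
    #(columnPairs a b) =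
      (∑ i ∈ range (a + 1), ∑ k ∈ range i, b.choose (k + 2)) + (a + 1) * (b + 1) := by
  rw [columnPairs, card_biUnion ((pairwise_disjoint_spanningPairs b).set_pairwise _), sum_sigma,
    sum_congr rfl fun i _ ↦ sum_card_spanningPairs b i, sum_add_distrib, sum_const, card_range,
    smul_eq_mul]

theorem bijOn_firstColumn_rowSums (a b : ℕ) :
    Set.BijOn (fun M ↦ (firstColumn M, rowSums M))
      {M | Admissible M ∧ (∃ p, M.head? = some p ∧ p.1 ≤ a) ∧
        ∃ q, M.getLast? = some q ∧ q.2 ≤ b}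
      (columnPairs a b) := by
  refine Set.InvOn.bijOn (f' := fun P ↦ matrixOf P.1 P.2) ⟨?_, ?_⟩ ?_ ?_
  · exact fun M hM ↦ hM.1.matrixOf_firstColumn_rowSums
  · intro P hP
    obtain ⟨i, -, j, -, hP⟩ := mem_columnPairs.1 hP
    obtain ⟨-, -, -, hcard⟩ := mem_spanningPairs.1 hP
    exact Prod.ext (firstColumn_matrixOf hcard)
      (rowSums_matrixOf hcard (le_of_mem_spanningPairs hP))
  · rintro M ⟨hM, ⟨p, hp, hpa⟩, q, hq, hqb⟩
    have hqp : q.1 ≤ p.1 :=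
      (hM.isGreatest_firstColumn_head hp).2 (hM.isLeast_firstColumn_getLast hq).1
    exact mem_columnPairs.2 ⟨p.1, hpa, q.1, hqp,
      hM.firstColumn_rowSums_mem_spanningPairs hp hq hqb⟩
  · intro P hP
    obtain ⟨i, hia, j, -, hP⟩ := mem_columnPairs.1 hP
    obtain ⟨-, hi, -, hcard⟩ := mem_spanningPairs.1 hP
    have hM := admissible_matrixOf ⟨i, hi⟩ hcard (le_of_mem_spanningPairs hP)
    have hhead := fst_le_and_snd_le_of_mem_matrixOf hP (List.head_mem hM.1)
    have hlast := fst_le_and_snd_le_of_mem_matrixOf hP (List.getLast_mem hM.1)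
    exact ⟨hM, ⟨_, List.head?_eq_some_head hM.1, hhead.1.trans hia⟩,
      _, List.getLast?_eq_some_getLast hM.1, hlast.2⟩

/-- The number of admissible lists with `m₁ ≤ a` and `μᵣ ≤ b` equals
`∑_{i=0}^{a} ∑_{k=0}^{i-1} C(b, k+2) + (a+1)(b+1)`. -/
theorem count_admissible_head_last_le (a b : ℕ) :
    {M : List (ℕ × ℕ) | Admissible M ∧
        (∃ p, M.head? = some p ∧ p.1 ≤ a) ∧
        (∃ q, M.getLast? = some q ∧ q.2 ≤ b)}.ncard =
      (∑ i ∈ Finset.range (a + 1), ∑ k ∈ Finset.range i, Nat.choose b (k + 2)) +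
        (a + 1) * (b + 1) := by
  rw [(bijOn_firstColumn_rowSums a b).ncard_eq, Set.ncard_coe_finset, card_columnPairs]
end

section
/- For every natural number n, Σ_{a=0}^{n} ( Σ_{i=0}^{a} Σ_{k=0}^{i−1} C(n−a, k+2) + a(n−a) ) = F(n+6) − (n² + 4n + 8), where C denotes the binomial coefficient. -/
/-!
Write `S(a, m) = ∑_{i ≤ a} ∑_{j ≤ i} C(m, j)` for the twice iterated partial sums of row `m` of
Pascal's triangle. Restoring the terms `j = 0, 1` shows that the summand is
`S(a + 1, m) - (a + m + 2)` with `m = n - a`. Summing over an antidiagonal turns partial sums in the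
first variable into partial sums in the index of the antidiagonal, and the antidiagonal sums of
Pascal's triangle are the Fibonacci numbers; so `∑_{a + m = n} S(a, m)` is a twice iterated partial
sum of Fibonacci numbers, namely `F(n + 5) - (n + 4)`.
-/

open Finset

theorem sum_antidiagonal_sum_range_succ {M : Type*} [AddCommMonoid M] (f : ℕ → ℕ → M) (n : ℕ) :
    ∑ p ∈ antidiagonal n, ∑ i ∈ range (p.1 + 1), f i p.2 =
      ∑ l ∈ range (n + 1), ∑ p ∈ antidiagonal l, f p.1 p.2 := by
  induction n with
  | zero => simp
  | succ n ih =>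
    calc ∑ p ∈ antidiagonal (n + 1), ∑ i ∈ range (p.1 + 1), f i p.2
      _ = f 0 (n + 1) + ∑ p ∈ antidiagonal n,
            (∑ i ∈ range (p.1 + 1), f i p.2 + f (p.1 + 1) p.2) := by
        simp only [Nat.sum_antidiagonal_succ, sum_range_succ _ (_ + 1), zero_add, sum_range_one]
      _ = ∑ p ∈ antidiagonal n, ∑ i ∈ range (p.1 + 1), f i p.2 +
            ∑ p ∈ antidiagonal (n + 1), f p.1 p.2 := by
        rw [sum_add_distrib, Nat.sum_antidiagonal_succ, add_left_comm]
      _ = ∑ l ∈ range (n + 2), ∑ p ∈ antidiagonal l, f p.1 p.2 := by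
        rw [ih, sum_range_succ _ (n + 1)]

theorem sum_range_fib_add_add_fib (c n : ℕ) :
    ∑ l ∈ range n, Nat.fib (l + c) + Nat.fib (c + 1) = Nat.fib (n + c + 1) := by
  induction n with
  | zero => simp
  | succ n ih =>
    rw [sum_range_succ, add_right_comm, ih, add_right_comm n 1 c, Nat.fib_add_two, add_comm]

theorem sum_antidiagonal_choose_swap (n : ℕ) :
    ∑ p ∈ antidiagonal n, p.2.choose p.1 = Nat.fib (n + 1) := by
  rw [Nat.fib_succ_eq_sum_choose]
  exact Nat.sum_antidiagonal_swap (f := fun p ↦ p.1.choose p.2)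

theorem sum_antidiagonal_sum_range_choose_add_one (n : ℕ) :
    ∑ p ∈ antidiagonal n, ∑ j ∈ range (p.1 + 1), p.2.choose j + 1 = Nat.fib (n + 3) := by
  rw [sum_antidiagonal_sum_range_succ (fun j m ↦ m.choose j)]
  simp only [sum_antidiagonal_choose_swap]
  exact sum_range_fib_add_add_fib 1 (n + 1)

theorem sum_antidiagonal_sum_range_sum_range_choose_add (n : ℕ) :
    ∑ p ∈ antidiagonal n, ∑ i ∈ range (p.1 + 1), ∑ j ∈ range (i + 1), p.2.choose j + (n + 4) =
      Nat.fib (n + 5) := by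
  calc
    _ = ∑ l ∈ range (n + 1),
          (∑ p ∈ antidiagonal l, ∑ j ∈ range (p.1 + 1), p.2.choose j + 1) + 3 := by
      rw [sum_antidiagonal_sum_range_succ (fun i m ↦ ∑ j ∈ range (i + 1), m.choose j),
        sum_add_distrib, sum_const, card_range, smul_eq_mul, mul_one, add_assoc]
    _ = ∑ l ∈ range (n + 1), Nat.fib (l + 3) + Nat.fib 4 := by
      simp only [sum_antidiagonal_sum_range_choose_add_one]
      rfl
    _ = Nat.fib (n + 5) := sum_range_fib_add_add_fib 3 (n + 1)

theorem sum_range_add_two_choose (i m : ℕ) :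
    ∑ j ∈ range (i + 2), m.choose j = ∑ k ∈ range i, m.choose (k + 2) + (m + 1) := by
  simp only [sum_range_succ', zero_add, Nat.choose_one_right, Nat.choose_zero_right, add_assoc]

theorem sum_range_add_two_sum_range_choose (a m : ℕ) :
    ∑ i ∈ range (a + 2), ∑ j ∈ range (i + 1), m.choose j =
      ∑ i ∈ range (a + 1), ∑ k ∈ range i, m.choose (k + 2) + a * m + (a + m + 2) := by
  rw [sum_range_succ' _ (a + 1)]
  simp only [add_assoc, Nat.reduceAdd, sum_range_add_two_choose, sum_add_distrib, sum_const,
    card_range, smul_eq_mul, zero_add, sum_range_one, Nat.choose_zero_right]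
  ring

theorem sum_antidiagonal_sum_choose_add_two_add_mul (n : ℕ) :
    ∑ p ∈ antidiagonal n,
        (∑ i ∈ range (p.1 + 1), ∑ k ∈ range i, p.2.choose (k + 2) + p.1 * p.2) +
      (n ^ 2 + 4 * n + 8) = Nat.fib (n + 6) := by
  have sum_correction : ∑ p ∈ antidiagonal n, (p.1 + p.2 + 2) = (n + 1) * (n + 2) := by
    rw [sum_congr rfl fun p hp ↦ by rw [mem_antidiagonal.mp hp], sum_const, Nat.card_antidiagonal,
      smul_eq_mul]
  calc
    _ = ∑ p ∈ antidiagonal n,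
          (∑ i ∈ range (p.1 + 1), ∑ k ∈ range i, p.2.choose (k + 2) + p.1 * p.2 +
            (p.1 + p.2 + 2)) + (n + 6) := by
      rw [sum_add_distrib (g := fun p : ℕ × ℕ ↦ p.1 + p.2 + 2), sum_correction]
      ring
    _ = ∑ p ∈ antidiagonal n,
          ∑ i ∈ range (p.1 + 2), ∑ j ∈ range (i + 1), p.2.choose j + (n + 6) := by
      simp only [sum_range_add_two_sum_range_choose]
    _ = ∑ p ∈ antidiagonal (n + 1),
          ∑ i ∈ range (p.1 + 1), ∑ j ∈ range (i + 1), p.2.choose j + (n + 1 + 4) := by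
      simp only [Nat.sum_antidiagonal_succ, zero_add, sum_range_one, Nat.choose_zero_right]
      ring
    _ = Nat.fib (n + 6) := sum_antidiagonal_sum_range_sum_range_choose_add (n + 1)

/-- `∑_{a=0}^{n} ( ∑_{i=0}^{a} ∑_{k=0}^{i-1} C(n-a, k+2) + a(n-a) )
      = F(n+6) - (n² + 4n + 8)`. -/
theorem sum_G_formula_eq_fib (n : ℕ) :
    ∑ a ∈ Finset.range (n + 1),
        ((∑ i ∈ Finset.range (a + 1), ∑ k ∈ Finset.range i,
            Nat.choose (n - a) (k + 2)) + a * (n - a)) =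
      Nat.fib (n + 6) - (n ^ 2 + 4 * n + 8) := by
  rw [← sum_antidiagonal_sum_choose_add_two_add_mul, Nat.add_sub_cancel,
    Nat.sum_antidiagonal_eq_sum_range_succ_mk]
end

section
/- For every natural number n, Σ_{a=0}^{n} Σ_{i=0}^{a} Σ_{k=0}^{i−1} C(n−a, k+2) = Σ_{k=0}^{n−1} C(n+1−k, k+4), where C denotes the binomial coefficient. -/
/-!
For fixed `a` and `k`, the term `C(n - a, k + 2)` occurs once for each `i` with `k < i ≤ a`, that is
`a - k = C(a - k, 1)` times. Summing over `a` is then a Vandermonde convolution in the upper index,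
`∑_{p + q = m} C(p, j) C(q, r) = C(m + 1, j + r + 1)`, with `m = n - k`, `j = 1` and `r = k + 2`.
-/

theorem sum_antidiagonal_choose_mul_choose (n j r : ℕ) :
    ∑ p ∈ Finset.HasAntidiagonal.antidiagonal n, p.1.choose j * p.2.choose r =
      (n + 1).choose (j + r + 1) := by
  induction n generalizing j with
  | zero => cases j <;> cases r <;> simp [Nat.choose_eq_zero_of_lt]
  | succ n ih =>
    rw [Finset.Nat.sum_antidiagonal_succ]
    cases j with
    | zero =>
      have sum_choose := ih 0
      simp only [Nat.choose_zero_right, one_mul, zero_add] at sum_choose ⊢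
      rw [sum_choose, Nat.choose_succ_succ' (n + 1) r]
    | succ j =>
      simp only [Nat.choose_zero_succ, zero_mul, zero_add, Nat.choose_succ_succ' _ j, add_mul,
        Finset.sum_add_distrib, ih]
      rw [Nat.choose_succ_succ' (n + 1), Nat.add_right_comm j 1 r]

-- The positive lower index `j + 1` kills the terms with `a < k`, where `a - k` truncates to `0`.
theorem sum_range_choose_sub_mul_choose_sub (n k j r : ℕ) :
    ∑ a ∈ Finset.range (n + 1), (a - k).choose (j + 1) * (n - a).choose r =
      (n + 1 - k).choose (j + r + 2) := by
  induction k generalizing n with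
  | zero =>
    simpa only [Nat.sub_zero, Nat.add_right_comm j 1 r,
      Finset.Nat.sum_antidiagonal_eq_sum_range_succ_mk] using
      sum_antidiagonal_choose_mul_choose n (j + 1) r
  | succ k ih =>
    cases n with
    | zero => simp
    | succ n => simpa [Finset.sum_range_succ' _ (n + 1)] using ih n

theorem sum_range_succ_sum_range_eq_sum_sub_nsmul {M : Type*} [AddCommMonoid M] (f : ℕ → M)
    {a n : ℕ} (han : a ≤ n) :
    ∑ i ∈ Finset.range (a + 1), ∑ k ∈ Finset.range i, f k =
      ∑ k ∈ Finset.range n, (a - k) • f k := by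
  calc
    _ = ∑ k ∈ Finset.range n, ∑ _i ∈ Finset.Ioc k a, f k :=
      Finset.sum_comm' fun i k ↦ by simp only [Finset.mem_range, Finset.mem_Ioc]; lia
    _ = _ := by simp only [Finset.sum_const, Nat.card_Ioc]

/-- `∑_{a=0}^{n} ∑_{i=0}^{a} ∑_{k=0}^{i-1} C(n-a, k+2)
      = ∑_{k=0}^{n-1} C(n+1-k, k+4)`. -/
theorem triple_sum_choose_eq (n : ℕ) :
    ∑ a ∈ Finset.range (n + 1), ∑ i ∈ Finset.range (a + 1),
        ∑ k ∈ Finset.range i, Nat.choose (n - a) (k + 2) =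
      ∑ k ∈ Finset.range n, Nat.choose (n + 1 - k) (k + 4) := by
  calc
    _ = ∑ a ∈ Finset.range (n + 1), ∑ k ∈ Finset.range n,
          (a - k) • (n - a).choose (k + 2) :=
      Finset.sum_congr rfl fun a ha ↦
        sum_range_succ_sum_range_eq_sum_sub_nsmul _ (Finset.mem_range_succ_iff.mp ha)
    _ = ∑ k ∈ Finset.range n, ∑ a ∈ Finset.range (n + 1),
          (a - k).choose 1 * (n - a).choose (k + 2) := by
      simp only [smul_eq_mul, Nat.choose_one_right]
      exact Finset.sum_comm
    _ = ∑ k ∈ Finset.range n, (n + 1 - k).choose (k + 4) :=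
      Finset.sum_congr rfl fun k _ ↦ by
        rw [sum_range_choose_sub_mul_choose_sub n k 0 (k + 2), zero_add]
end

section
/- For every natural number n, Σ_{k=0}^{n−1} C(n+1−k, k+4) + C(n+1, 3) = F(n+6) − (n² + 4n + 8), where C denotes the binomial coefficient. -/
/-!
The Fibonacci number `F(n + 6)` is the sum of the shallow diagonal `C(n + 5 - k, k)` of Pascal's
triangle. Its terms with `k ≥ 4` form the sum in the theorem, while the terms with `k < 4` add up to
`C(n + 1, 3)` plus a quadratic polynomial, because `C(n + 2, 3) = C(n + 1, 3) + C(n + 1, 2)` and two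
consecutive triangular numbers add up to a square.
-/

theorem succ_choose_two (n : ℕ) : (n + 1).choose 2 = n + n.choose 2 := by
  rw [Nat.choose_succ_succ' n 1, Nat.choose_one_right]

theorem choose_two_add_succ_choose_two (n : ℕ) : n.choose 2 + (n + 1).choose 2 = n ^ 2 := by
  induction n with
  | zero => rfl
  | succ n ih =>
    rw [succ_choose_two (n + 1)]
    linarith [succ_choose_two n]

theorem fib_succ_eq_sum_range_choose {n N : ℕ} (h : n < 2 * N) :
    Nat.fib (n + 1) = ∑ k ∈ Finset.range N, (n - k).choose k := by
  have choose_eq_zero {k : ℕ} (hk : n < 2 * k) : (n - k).choose k = 0 :=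
    Nat.choose_eq_zero_of_lt (by lia)
  calc Nat.fib (n + 1) = ∑ p ∈ Finset.HasAntidiagonal.antidiagonal n, p.2.choose p.1 := by
        rw [Nat.fib_succ_eq_sum_choose, ← Finset.Nat.sum_antidiagonal_swap]
        rfl
    _ = ∑ k ∈ Finset.range (n + 1), (n - k).choose k :=
        Finset.Nat.sum_antidiagonal_eq_sum_range_succ (fun i j ↦ j.choose i) n
    _ = ∑ k ∈ Finset.range (max (n + 1) N), (n - k).choose k :=
        (Finset.eventually_constant_sum (fun k hk ↦ choose_eq_zero (by lia)) (le_max_left _ _)).symm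
    _ = ∑ k ∈ Finset.range N, (n - k).choose k :=
        Finset.eventually_constant_sum (fun k hk ↦ choose_eq_zero (by lia)) (le_max_right _ _)

theorem fib_add_succ_eq_sum_range_choose_add_sum_range_choose {m n N : ℕ} (h : n < m + 2 * N) :
    Nat.fib (n + m + 1) =
      ∑ k ∈ Finset.range m, (n + m - k).choose k +
        ∑ k ∈ Finset.range N, (n - k).choose (k + m) := by
  rw [fib_succ_eq_sum_range_choose (N := m + N) (by lia), Finset.sum_range_add]
  simp only [add_comm m, Nat.add_sub_add_right]

theorem sum_range_four_choose (n : ℕ) :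
    ∑ k ∈ Finset.range 4, (n + 5 - k).choose k = (n + 1).choose 3 + (n ^ 2 + 4 * n + 8) := by
  calc ∑ k ∈ Finset.range 4, (n + 5 - k).choose k
      = 1 + (n + 4) + (n + 3).choose 2 + (n + 2).choose 3 := by
        simp [Finset.sum_range_succ]
    _ = 1 + (n + 4) + (n + 2 + (n + 2).choose 2) + ((n + 1).choose 2 + (n + 1).choose 3) := by
        rw [succ_choose_two (n + 2), Nat.choose_succ_succ' (n + 1) 2]
    _ = (n + 1).choose 3 + (n ^ 2 + 4 * n + 8) := by
        linarith [choose_two_add_succ_choose_two (n + 1)]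

/-- `∑_{k=0}^{n-1} C(n+1-k, k+4) + C(n+1, 3) = F(n+6) - (n² + 4n + 8)`. -/
theorem sum_choose_add_choose_eq_fib (n : ℕ) :
    (∑ k ∈ Finset.range n, Nat.choose (n + 1 - k) (k + 4)) + Nat.choose (n + 1) 3 =
      Nat.fib (n + 6) - (n ^ 2 + 4 * n + 8) := by
  refine Nat.eq_sub_of_add_eq ?_
  calc (∑ k ∈ Finset.range n, (n + 1 - k).choose (k + 4)) + (n + 1).choose 3 + (n ^ 2 + 4 * n + 8)
      = ∑ k ∈ Finset.range 4, (n + 5 - k).choose k +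
          ∑ k ∈ Finset.range n, (n + 1 - k).choose (k + 4) := by
        rw [sum_range_four_choose, add_assoc, add_comm]
    _ = Nat.fib (n + 6) :=
        (fib_add_succ_eq_sum_range_choose_add_sum_range_choose (m := 4) (n := n + 1) (by lia)).symm
end

section
/- Let (N, W) be a complete simple game with exactly two types, with classes N₁ ≻ N₂ of cardinalities n₁ = |N₁| and n₂ = |N₂|, and let P be its set of δ-minimal winning profiles. Then: (i) P is nonempty and every (p₁,p₂) ∈ P satisfies p₁ ≤ n₁ and p₂ ≤ n₂; (ii) if P is a singleton {(m₁,m₂)}, then m₁ > 0 and m₂ < n₂; (iii) any two distinct profiles (p₁,p₂) ≠ (q₁,q₂) in P satisfy p₁ ≠ q₁, and p₁ > q₁ if and only if p₁ + p₂ < q₁ + q₂ (so that, listed in strictly decreasing order of first coordinate, the rows of P have strictly increasing sums). -/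
/-- A simple game on `Fin n`: the grand coalition wins, the empty coalition
loses, and winning coalitions are closed under supersets. -/
def IsSimpleGame {n : ℕ} (W : Set (Finset (Fin n))) : Prop :=
  Finset.univ ∈ W ∧ ∅ ∉ W ∧ ∀ S ∈ W, ∀ T, S ⊆ T → T ∈ W

/-- Player `i` is at least as desirable as player `j`. -/
def MoreDesirable {n : ℕ} (W : Set (Finset (Fin n))) (i j : Fin n) : Prop :=
  ∀ S : Finset (Fin n), i ∉ S → j ∉ S → insert j S ∈ W → insert i S ∈ W

/-- Players `i` and `j` are equally desirable. -/
def EquallyDesirable {n : ℕ} (W : Set (Finset (Fin n))) (i j : Fin n) : Prop :=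
  MoreDesirable W i j ∧ MoreDesirable W j i

/-- Player `i` is strictly more desirable than player `j`. -/
def StrictlyMoreDesirable {n : ℕ} (W : Set (Finset (Fin n))) (i j : Fin n) : Prop :=
  MoreDesirable W i j ∧ ¬ MoreDesirable W j i

/-- The game is complete: the desirability preordering is total. -/
def IsCompleteGame {n : ℕ} (W : Set (Finset (Fin n))) : Prop :=
  ∀ i j : Fin n, MoreDesirable W i j ∨ MoreDesirable W j i

/-- The game has exactly two types of players, with classes `N₁ ≻ N₂`:
both classes are nonempty, they partition the player set, players within a
class are equally desirable, and every player of `N₁` is strictly more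
desirable than every player of `N₂`. -/
def TwoTypes {n : ℕ} (W : Set (Finset (Fin n))) (N₁ N₂ : Finset (Fin n)) : Prop :=
  N₁.Nonempty ∧ N₂.Nonempty ∧ Disjoint N₁ N₂ ∧ N₁ ∪ N₂ = Finset.univ ∧
  (∀ i ∈ N₁, ∀ j ∈ N₁, EquallyDesirable W i j) ∧
  (∀ i ∈ N₂, ∀ j ∈ N₂, EquallyDesirable W i j) ∧
  (∀ i ∈ N₁, ∀ j ∈ N₂, StrictlyMoreDesirable W i j)

/-- A profile `(p₁, p₂)` is winning if some winning coalition intersects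
`N₁` in `p₁` players and `N₂` in `p₂` players. -/
def WinningProfile {n : ℕ} (W : Set (Finset (Fin n))) (N₁ N₂ : Finset (Fin n))
    (p : ℕ × ℕ) : Prop :=
  ∃ S ∈ W, (S ∩ N₁).card = p.1 ∧ (S ∩ N₂).card = p.2

/-- The set of δ-minimal winning profiles: winning profiles `m` such that
no winning profile `q ≠ m` is δ-dominated by `m`, where `m` δ-dominates `q`
iff `q₁ ≤ m₁` and `q₁ + q₂ ≤ m₁ + m₂`. -/
def DeltaMinProfiles {n : ℕ} (W : Set (Finset (Fin n))) (N₁ N₂ : Finset (Fin n)) :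
    Set (ℕ × ℕ) :=
  {m | WinningProfile W N₁ N₂ m ∧
       ∀ q, WinningProfile W N₁ N₂ q → q.1 ≤ m.1 → q.1 + q.2 ≤ m.1 + m.2 → q = m}

/-!
In the coordinates `(p₁, p₁ + p₂)` the δ-ordering is the product order on `ℕ × ℕ`, so every
winning profile lies above a δ-minimal one and distinct δ-minimal profiles are incomparable.

If `T` wins and its profile is δ-below that of `S`, then `S` wins: first trade the `N₁`-members of
`T` for `N₁`-members of `S`; all remaining members outside `S` are then in `N₂`, and may be traded
for any members of `S`.

Since `N₁ ≻ N₂` is strict, some profile `(a + 1, b)` wins while `(a, b + 1)` loses. A unique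
δ-minimal profile is δ-below the former but not the latter, which forces its first coordinate to
be `a + 1` and its second to be at most `b < n₂`.
-/

section MinimalFor

variable {ι α : Type*} {P : ι → Prop} {f : ι → α}

theorem exists_minimalFor_le_of_wellFoundedLT [Preorder α] [WellFoundedLT α] {i : ι} (hi : P i) :
    ∃ j, MinimalFor P f j ∧ f j ≤ f i := by
  obtain ⟨j, ⟨hj, hji⟩, hmin⟩ :=
    exists_minimalFor_of_wellFoundedLT (fun j ↦ P j ∧ f j ≤ f i) f ⟨i, hi, le_rfl⟩
  exact ⟨j, ⟨hj, fun k hk hkj ↦ hmin ⟨hk, hkj.trans hji⟩ hkj⟩, hji⟩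

theorem minimalFor_iff_forall_eq_of_injective [PartialOrder α] (hf : f.Injective) {i : ι} :
    MinimalFor P f i ↔ P i ∧ ∀ j, P j → f j ≤ f i → j = i :=
  and_congr_right fun _ ↦ forall_congr' fun _ ↦ imp_congr_right fun _ ↦
    ⟨fun h hji ↦ hf (hji.antisymm (h hji)), fun h hji ↦ (congrArg f (h hji)).ge⟩

end MinimalFor

/-- The profile of a coalition `S`: the numbers of its members in `N₁` and in `N₂`. -/
def profile {α : Type*} [DecidableEq α] (N₁ N₂ S : Finset α) : ℕ × ℕ :=
  ((S ∩ N₁).card, (S ∩ N₂).card)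

/-- The coordinates `(p₁, p₁ + p₂)` of a profile, in which the δ-ordering becomes the product order:
`p` δ-dominates `q` when `deltaCoords q ≤ deltaCoords p`. -/
def deltaCoords (p : ℕ × ℕ) : ℕ × ℕ :=
  (p.1, p.1 + p.2)

theorem deltaCoords_injective : Function.Injective deltaCoords := by
  intro p q h
  simp only [deltaCoords, Prod.mk.injEq] at h
  exact Prod.ext h.1 (by lia)

theorem deltaCoords_le_deltaCoords {p q : ℕ × ℕ} :
    deltaCoords p ≤ deltaCoords q ↔ p.1 ≤ q.1 ∧ p.1 + p.2 ≤ q.1 + q.2 :=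
  Iff.rfl

theorem fst_ne_and_fst_lt_iff_of_not_deltaCoords_le {p q : ℕ × ℕ}
    (hpq : ¬ deltaCoords p ≤ deltaCoords q) (hqp : ¬ deltaCoords q ≤ deltaCoords p) :
    p.1 ≠ q.1 ∧ (q.1 < p.1 ↔ p.1 + p.2 < q.1 + q.2) := by
  rw [deltaCoords_le_deltaCoords] at hpq hqp
  lia

section Profile

variable {α : Type*} [DecidableEq α] {N₁ N₂ S : Finset α} {i : α}

theorem profile_insert_of_mem_left (hdisj : Disjoint N₁ N₂) (hi : i ∈ N₁) (hiS : i ∉ S) :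
    profile N₁ N₂ (insert i S) = profile N₁ N₂ S + (1, 0) := by
  have hi₂ : i ∉ N₂ := Finset.disjoint_left.1 hdisj hi
  rw [profile, Finset.insert_inter_of_mem hi, Finset.insert_inter_of_notMem hi₂,
    Finset.card_insert_of_notMem fun h ↦ hiS (Finset.mem_of_mem_inter_left h)]
  rfl

theorem profile_insert_of_mem_right (hdisj : Disjoint N₁ N₂) (hi : i ∈ N₂) (hiS : i ∉ S) :
    profile N₁ N₂ (insert i S) = profile N₁ N₂ S + (0, 1) :=
  congrArg Prod.swap (profile_insert_of_mem_left hdisj.symm hi hiS)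

theorem profile_le_card (N₁ N₂ S : Finset α) : profile N₁ N₂ S ≤ (N₁.card, N₂.card) :=
  ⟨Finset.card_le_card Finset.inter_subset_right, Finset.card_le_card Finset.inter_subset_right⟩

theorem card_inter_add_card_inter_of_isCompl [Fintype α] (h : IsCompl N₁ N₂) (S : Finset α) :
    (S ∩ N₁).card + (S ∩ N₂).card = S.card := by
  have hdisj : Disjoint (S ∩ N₁) (S ∩ N₂) :=
    h.disjoint.mono Finset.inter_subset_right Finset.inter_subset_right
  rw [← Finset.card_union_of_disjoint hdisj, ← Finset.inter_union_distrib_left,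
    ← Finset.sup_eq_union, h.sup_eq_top, Finset.top_eq_univ, Finset.inter_univ]

theorem deltaCoords_profile_of_isCompl [Fintype α] (h : IsCompl N₁ N₂) (S : Finset α) :
    deltaCoords (profile N₁ N₂ S) = ((S ∩ N₁).card, S.card) :=
  Prod.ext rfl (card_inter_add_card_inter_of_isCompl h S)

end Profile

section Games

variable {n : ℕ} {W : Set (Finset (Fin n))} {N₁ N₂ S T : Finset (Fin n)} {i j : Fin n}
  {p : ℕ × ℕ}

theorem IsSimpleGame.isUpperSet (hW : IsSimpleGame W) : IsUpperSet W :=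
  fun S T hST hS ↦ hW.2.2 S hS T hST

theorem MoreDesirable.insert_erase_mem (hij : MoreDesirable W i j) (hi : i ∉ T) (hj : j ∈ T)
    (hT : T ∈ W) : insert i (T.erase j) ∈ W :=
  hij _ (fun h ↦ hi (Finset.mem_of_mem_erase h)) (Finset.notMem_erase j T)
    (by rwa [Finset.insert_erase hj])

theorem mem_of_card_le_of_moreDesirable (hW : IsUpperSet W) (hT : T ∈ W) (hcard : T.card ≤ S.card)
    (hdes : ∀ i ∈ S \ T, ∀ j ∈ T \ S, MoreDesirable W i j) : S ∈ W := by
  induction hk : (T \ S).card generalizing T with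
  | zero => exact hW (Finset.sdiff_eq_empty_iff_subset.1 (Finset.card_eq_zero.1 hk)) hT
  | succ k ih =>
    obtain ⟨j, hj⟩ : (T \ S).Nonempty := Finset.card_pos.1 (by lia)
    obtain ⟨i, hi⟩ : (S \ T).Nonempty :=
      Finset.card_pos.1 (by have := Finset.card_sdiff_le_card_sdiff_iff.2 hcard; lia)
    obtain ⟨hjT, hjS⟩ := Finset.mem_sdiff.1 hj
    obtain ⟨hiS, hiT⟩ := Finset.mem_sdiff.1 hi
    have hsdiff : insert i (T.erase j) \ S = (T \ S).erase j := by
      rw [Finset.insert_sdiff_of_mem _ hiS, Finset.erase_sdiff_comm]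
    refine ih ((hdes i hi j hj).insert_erase_mem hiT hjT hT) ?_ ?_ ?_
    · rwa [Finset.card_insert_of_notMem (fun h ↦ hiT (Finset.mem_of_mem_erase h)),
        Finset.card_erase_add_one hjT]
    · rw [hsdiff]
      exact fun i' hi' j' hj' ↦ hdes i' (by grind) j' (Finset.mem_of_mem_erase hj')
    · rw [hsdiff, Finset.card_erase_of_mem hj, hk, Nat.add_sub_cancel]

theorem TwoTypes.isCompl (h : TwoTypes W N₁ N₂) : IsCompl N₁ N₂ :=
  ⟨h.2.2.1, codisjoint_iff.2 h.2.2.2.1⟩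

theorem TwoTypes.moreDesirable_of_mem_left (h : TwoTypes W N₁ N₂) (hi : i ∈ N₁) (hj : j ∈ N₁) :
    MoreDesirable W i j :=
  (h.2.2.2.2.1 i hi j hj).1

theorem TwoTypes.moreDesirable_of_mem_right (h : TwoTypes W N₁ N₂) (i : Fin n) (hj : j ∈ N₂) :
    MoreDesirable W i j := by
  obtain ⟨-, -, -, hunion, -, hequiv, hstrict⟩ := h
  rcases Finset.mem_union.1 (hunion ▸ Finset.mem_univ i) with hi | hi
  · exact (hstrict i hi j hj).1
  · exact (hequiv i hi j hj).1

theorem TwoTypes.exists_insert_mem_insert_notMem (h : TwoTypes W N₁ N₂) :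
    ∃ S, ∃ i ∈ N₁, ∃ j ∈ N₂, i ∉ S ∧ j ∉ S ∧ insert i S ∈ W ∧ insert j S ∉ W := by
  obtain ⟨⟨i, hi⟩, ⟨j, hj⟩, -, -, -, -, hstrict⟩ := h
  have hji : ¬ MoreDesirable W j i := (hstrict i hi j hj).2
  simp only [MoreDesirable, not_forall] at hji
  obtain ⟨S, hjS, hiS, hwin, hlose⟩ := hji
  exact ⟨S, i, hi, j, hj, hiS, hjS, hwin, hlose⟩

theorem winningProfile_iff_exists_profile_eq :
    WinningProfile W N₁ N₂ p ↔ ∃ S ∈ W, profile N₁ N₂ S = p := by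
  simp only [WinningProfile, profile, Prod.ext_iff]

theorem winningProfile_profile (hS : S ∈ W) : WinningProfile W N₁ N₂ (profile N₁ N₂ S) :=
  ⟨S, hS, rfl, rfl⟩

theorem WinningProfile.le_card (hp : WinningProfile W N₁ N₂ p) : p ≤ (N₁.card, N₂.card) := by
  obtain ⟨S, -, rfl⟩ := winningProfile_iff_exists_profile_eq.1 hp
  exact profile_le_card N₁ N₂ S

theorem TwoTypes.mem_of_deltaCoords_le (h : TwoTypes W N₁ N₂) (hW : IsUpperSet W)
    (hp : WinningProfile W N₁ N₂ p) (hle : deltaCoords p ≤ deltaCoords (profile N₁ N₂ S)) :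
    S ∈ W := by
  obtain ⟨T, hT, rfl⟩ := winningProfile_iff_exists_profile_eq.1 hp
  simp only [deltaCoords_profile_of_isCompl h.isCompl, Prod.mk_le_mk] at hle
  obtain ⟨hle₁, hle⟩ := hle
  obtain ⟨A, hAS, hA⟩ := Finset.exists_subset_card_eq hle₁
  have hAN : A ⊆ N₁ := hAS.trans Finset.inter_subset_right
  have hcard : (A ∪ T ∩ N₂).card = T.card := by
    rw [Finset.card_union_of_disjoint (h.isCompl.disjoint.mono hAN Finset.inter_subset_right), hA,
      card_inter_add_card_inter_of_isCompl h.isCompl]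
  have hmem : A ∪ T ∩ N₂ ∈ W := by
    refine mem_of_card_le_of_moreDesirable hW hT hcard.ge fun i hi j hj ↦ ?_
    have hunion : j ∈ N₁ ∪ N₂ := h.2.2.2.1 ▸ Finset.mem_univ j
    exact h.moreDesirable_of_mem_left (by grind) (by grind)
  exact mem_of_card_le_of_moreDesirable hW hmem (hcard.trans_le hle) fun i _ j hj ↦
    h.moreDesirable_of_mem_right i (by grind)

theorem mem_deltaMinProfiles_iff_minimalFor :
    p ∈ DeltaMinProfiles W N₁ N₂ ↔ MinimalFor (WinningProfile W N₁ N₂) deltaCoords p := by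
  simp only [minimalFor_iff_forall_eq_of_injective deltaCoords_injective,
    deltaCoords_le_deltaCoords, and_imp]
  rfl

theorem WinningProfile.exists_mem_deltaMinProfiles_le (hp : WinningProfile W N₁ N₂ p) :
    ∃ m ∈ DeltaMinProfiles W N₁ N₂, deltaCoords m ≤ deltaCoords p := by
  simpa only [mem_deltaMinProfiles_iff_minimalFor] using
    exists_minimalFor_le_of_wellFoundedLT hp

theorem isAntichain_deltaMinProfiles :
    IsAntichain (fun p q ↦ deltaCoords p ≤ deltaCoords q) (DeltaMinProfiles W N₁ N₂) :=
  fun p hp _ hq hne hle ↦ hne (hq.2 p hp.1 hle.1 hle.2)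

theorem TwoTypes.fst_pos_and_snd_lt_of_deltaMinProfiles_eq_singleton (h : TwoTypes W N₁ N₂)
    (hW : IsUpperSet W) {m : ℕ × ℕ} (hm : DeltaMinProfiles W N₁ N₂ = {m}) :
    0 < m.1 ∧ m.2 < N₂.card := by
  obtain ⟨S, i, hi, j, hj, hiS, hjS, hwin, hlose⟩ := h.exists_insert_mem_insert_notMem
  have hprofile_i := profile_insert_of_mem_left h.isCompl.disjoint hi hiS
  have hprofile_j := profile_insert_of_mem_right h.isCompl.disjoint hj hjS
  have hm_win : WinningProfile W N₁ N₂ m := (hm.ge rfl : m ∈ DeltaMinProfiles W N₁ N₂).1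
  have hm_le : deltaCoords m ≤ deltaCoords (profile N₁ N₂ S + (1, 0)) := by
    obtain ⟨m', hm', hle⟩ := (winningProfile_profile hwin).exists_mem_deltaMinProfiles_le
    obtain rfl : m' = m := hm.le hm'
    exact hprofile_i ▸ hle
  have hm_not_le : ¬ deltaCoords m ≤ deltaCoords (profile N₁ N₂ S + (0, 1)) := fun hle ↦
    hlose (h.mem_of_deltaCoords_le hW hm_win (hprofile_j ▸ hle))
  have hS_card : (profile N₁ N₂ S).2 + 1 ≤ N₂.card := by
    simpa only [hprofile_j, Prod.snd_add] using (profile_le_card N₁ N₂ (insert j S)).2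
  simp only [deltaCoords_le_deltaCoords, Prod.fst_add, Prod.snd_add] at hm_le hm_not_le
  lia

end Games

/-- Part A of the Carreras–Freixas parametrization theorem for two types:
the δ-minimal winning profiles of a complete simple game with exactly two
types satisfy the defining conditions of an admissible matrix. -/
theorem deltaMinProfiles_conditions {n : ℕ} (hn : 1 ≤ n)
    (W : Set (Finset (Fin n))) (N₁ N₂ : Finset (Fin n))
    (hW : IsSimpleGame W) (hc : IsCompleteGame W) (h2 : TwoTypes W N₁ N₂) :
    (DeltaMinProfiles W N₁ N₂).Nonempty ∧
    (∀ p ∈ DeltaMinProfiles W N₁ N₂, p.1 ≤ N₁.card ∧ p.2 ≤ N₂.card) ∧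
    (∀ m, DeltaMinProfiles W N₁ N₂ = {m} → 0 < m.1 ∧ m.2 < N₂.card) ∧
    (∀ p ∈ DeltaMinProfiles W N₁ N₂, ∀ q ∈ DeltaMinProfiles W N₁ N₂, p ≠ q →
      p.1 ≠ q.1 ∧ (q.1 < p.1 ↔ p.1 + p.2 < q.1 + q.2)) := by
  refine ⟨?_, fun p hp ↦ hp.1.le_card,
    fun m ↦ h2.fst_pos_and_snd_lt_of_deltaMinProfiles_eq_singleton hW.isUpperSet,
    fun p hp q hq hne ↦ fst_ne_and_fst_lt_iff_of_not_deltaCoords_le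
      (isAntichain_deltaMinProfiles hp hq hne) (isAntichain_deltaMinProfiles hq hp hne.symm)⟩
  obtain ⟨m, hm, -⟩ :=
    (winningProfile_profile (N₁ := N₁) (N₂ := N₂) hW.1).exists_mem_deltaMinProfiles_le
  exact ⟨m, hm⟩
end

section
/- Let n₁, n₂ ≥ 1 be natural numbers and let P be a nonempty finite set of pairs (p₁,p₂) of natural numbers with p₁ ≤ n₁ and p₂ ≤ n₂, such that: if P is a singleton {(m₁,m₂)} then m₁ > 0 and m₂ < n₂; and any two distinct members (p₁,p₂) ≠ (q₁,q₂) of P satisfy p₁ ≠ q₁ and (p₁ > q₁ if and only if p₁ + p₂ < q₁ + q₂). Then there exists a complete simple game on n₁ + n₂ players with exactly two types, with classes N₁ ≻ N₂ of cardinalities n₁ and n₂ respectively, whose set of δ-minimal winning profiles is exactly P. -/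
/-!
Call a coalition winning when its profile δ-dominates some member of `P`. The condition on pairs
says that `P` is an antichain for the δ-ordering, so `P` is exactly the set of δ-minimal winning
profiles. Exchanging a player of `N₂` for one of `N₁` raises the first coordinate of a profile and
keeps the sum, so the game is complete and `N₁ ≿ N₂`. Strictness needs a member `(a + 1, b)` of `P`
with `b < n₂`: exchanging a player of `N₁` for one of `N₂` turns it into `(a, b + 1)`, which it
strictly δ-dominates and which therefore loses. In an antichain with two members, the one with the
larger first coordinate is of this form; for a singleton this is its admissibility condition.
-/

open Finset

/-- The δ-ordering on profiles: `DeltaLE p q` means that `q` δ-dominates `p`. -/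
def DeltaLE (p q : ℕ × ℕ) : Prop :=
  p.1 ≤ q.1 ∧ p.1 + p.2 ≤ q.1 + q.2

namespace DeltaLE

variable {p q r : ℕ × ℕ}

theorem refl (p : ℕ × ℕ) : DeltaLE p p :=
  ⟨le_rfl, le_rfl⟩

theorem trans (hpq : DeltaLE p q) (hqr : DeltaLE q r) : DeltaLE p r :=
  ⟨hpq.1.trans hqr.1, hpq.2.trans hqr.2⟩

theorem antisymm (hpq : DeltaLE p q) (hqp : DeltaLE q p) : p = q := by
  obtain ⟨hfst, hsum⟩ := hpq
  obtain ⟨hfst', hsum'⟩ := hqp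
  ext <;> omega

theorem of_le (h : p ≤ q) : DeltaLE p q :=
  ⟨h.1, add_le_add h.1 h.2⟩

end DeltaLE

section Antichain

variable {P : Set (ℕ × ℕ)}

theorem isAntichain_deltaLE_iff :
    IsAntichain DeltaLE P ↔ ∀ p ∈ P, ∀ q ∈ P, p ≠ q →
      p.1 ≠ q.1 ∧ (q.1 < p.1 ↔ p.1 + p.2 < q.1 + q.2) := by
  constructor
  · intro hP p hp q hq hne
    have hpq : ¬ DeltaLE p q := hP hp hq hne
    have hqp : ¬ DeltaLE q p := hP hq hp hne.symm
    unfold DeltaLE at hpq hqp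
    omega
  · rintro h p hp q hq hne ⟨hfst, hsum⟩
    have hqp := h q hq p hp hne.symm
    omega

theorem exists_fst_pos_snd_lt_of_nontrivial {k : ℕ} (hP : IsAntichain DeltaLE P)
    (hnt : P.Nontrivial) (hk : ∀ p ∈ P, p.2 ≤ k) : ∃ p ∈ P, 0 < p.1 ∧ p.2 < k := by
  obtain ⟨p, hp, q, hq, hne⟩ := hnt
  wlog hlt : q.1 < p.1 generalizing p q
  · have hne_fst := (isAntichain_deltaLE_iff.1 hP p hp q hq hne).1
    exact this q hq p hp hne.symm (by omega)
  have hsum := (isAntichain_deltaLE_iff.1 hP p hp q hq hne).2.1 hlt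
  have := hk q hq
  exact ⟨p, hp, by omega, by omega⟩

theorem zero_notMem_of_exists_fst_pos (hP : IsAntichain DeltaLE P) (hpos : ∃ p ∈ P, 0 < p.1) :
    0 ∉ P := by
  obtain ⟨p, hp, hp_pos⟩ := hpos
  intro hzero
  have : 0 = p := hP.eq hzero hp (.of_le zero_le)
  simp [← this] at hp_pos

end Antichain

section Profile

variable {α : Type*} [DecidableEq α] {N₁ N₂ S T : Finset α} {i j : α}

/-- The profile of a coalition `S` with respect to the classes `N₁` and `N₂`. -/
def coalitionProfile (N₁ N₂ S : Finset α) : ℕ × ℕ :=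
  (#(S ∩ N₁), #(S ∩ N₂))

theorem coalitionProfile_mono (hST : S ⊆ T) :
    coalitionProfile N₁ N₂ S ≤ coalitionProfile N₁ N₂ T :=
  ⟨card_le_card (inter_subset_inter_right hST), card_le_card (inter_subset_inter_right hST)⟩

theorem coalitionProfile_le : coalitionProfile N₁ N₂ S ≤ (#N₁, #N₂) :=
  ⟨card_le_card inter_subset_right, card_le_card inter_subset_right⟩

theorem coalitionProfile_sum [Fintype α] (hN : IsCompl N₁ N₂) (S : Finset α) :
    (coalitionProfile N₁ N₂ S).1 + (coalitionProfile N₁ N₂ S).2 = #S := by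
  rw [coalitionProfile, ← hN.compl_eq, ← sdiff_eq_inter_compl, card_inter_add_card_sdiff]

theorem coalitionProfile_union (hN : Disjoint N₁ N₂) (hS : S ⊆ N₁) (hT : T ⊆ N₂) :
    coalitionProfile N₁ N₂ (S ∪ T) = (#S, #T) := by
  have hSN : Disjoint S N₂ := hN.mono_left hS
  have hTN : Disjoint T N₁ := hN.symm.mono_left hT
  simp only [coalitionProfile, union_inter_distrib_right, inter_eq_left.2 hS, inter_eq_left.2 hT,
    disjoint_iff_inter_eq_empty.1 hSN, disjoint_iff_inter_eq_empty.1 hTN, union_empty, empty_union]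

theorem exists_subset_coalitionProfile_eq {A B : Finset α} {p : ℕ × ℕ}
    (hN : Disjoint N₁ N₂) (hA : A ⊆ N₁) (hB : B ⊆ N₂) (hp : p ≤ (#A, #B)) :
    ∃ S ⊆ A ∪ B, coalitionProfile N₁ N₂ S = p := by
  obtain ⟨X, hXA, hX⟩ := exists_subset_card_eq hp.1
  obtain ⟨Y, hYB, hY⟩ := exists_subset_card_eq hp.2
  exact ⟨X ∪ Y, union_subset_union hXA hYB, by
    rw [coalitionProfile_union hN (hXA.trans hA) (hYB.trans hB), hX, hY]⟩

theorem coalitionProfile_insert_left (hN : Disjoint N₁ N₂) (hi : i ∈ N₁) (hiS : i ∉ S) :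
    coalitionProfile N₁ N₂ (insert i S) = coalitionProfile N₁ N₂ S + (1, 0) := by
  have hiN : i ∉ S ∩ N₁ := fun h => hiS (mem_inter.1 h).1
  simp [coalitionProfile, insert_inter_of_mem hi,
    insert_inter_of_notMem (disjoint_left.1 hN hi), card_insert_of_notMem hiN]

theorem coalitionProfile_insert_right (hN : Disjoint N₁ N₂) (hi : i ∈ N₂) (hiS : i ∉ S) :
    coalitionProfile N₁ N₂ (insert i S) = coalitionProfile N₁ N₂ S + (0, 1) := by
  have hiN : i ∉ S ∩ N₂ := fun h => hiS (mem_inter.1 h).1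
  simp [coalitionProfile, insert_inter_of_mem hi,
    insert_inter_of_notMem (disjoint_right.1 hN hi), card_insert_of_notMem hiN]

theorem deltaLE_coalitionProfile_insert [Fintype α] (hN : IsCompl N₁ N₂) (hij : j ∈ N₁ → i ∈ N₁)
    (hiS : i ∉ S) (hjS : j ∉ S) :
    DeltaLE (coalitionProfile N₁ N₂ (insert j S)) (coalitionProfile N₁ N₂ (insert i S)) := by
  constructor
  · by_cases hj : j ∈ N₁
    · simp only [coalitionProfile_insert_left hN.disjoint hj hjS,
        coalitionProfile_insert_left hN.disjoint (hij hj) hiS, le_refl]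
    · simp only [coalitionProfile, insert_inter_of_notMem hj]
      exact card_le_card (inter_subset_inter_right (subset_insert i S))
  · rw [coalitionProfile_sum hN, coalitionProfile_sum hN, card_insert_of_notMem hiS,
      card_insert_of_notMem hjS]

end Profile

section GeneratedGame

variable {n : ℕ} {N₁ N₂ : Finset (Fin n)} {P : Set (ℕ × ℕ)} {i j : Fin n}

/-- The game generated by a set `P` of profiles: the coalitions whose profile δ-dominates a member
of `P`. -/
def generatedGame (N₁ N₂ : Finset (Fin n)) (P : Set (ℕ × ℕ)) : Set (Finset (Fin n)) :=
  {S | ∃ p ∈ P, DeltaLE p (coalitionProfile N₁ N₂ S)}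

theorem isSimpleGame_generatedGame (hP : ∃ p ∈ P, p ≤ (#N₁, #N₂)) (hzero : 0 ∉ P) :
    IsSimpleGame (generatedGame N₁ N₂ P) := by
  refine ⟨?_, ?_, ?_⟩
  · obtain ⟨p, hp, hle⟩ := hP
    exact ⟨p, hp, by simpa only [coalitionProfile, univ_inter] using DeltaLE.of_le hle⟩
  · rintro ⟨p, hp, hle⟩
    have hp_zero : p = 0 := by
      simp only [coalitionProfile, empty_inter, card_empty] at hle
      exact hle.antisymm (.of_le zero_le)
    exact hzero (hp_zero ▸ hp)
  · rintro S ⟨p, hp, hle⟩ T hST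
    exact ⟨p, hp, hle.trans (.of_le (coalitionProfile_mono hST))⟩

theorem moreDesirable_generatedGame (hN : IsCompl N₁ N₂) (hij : j ∈ N₁ → i ∈ N₁) :
    MoreDesirable (generatedGame N₁ N₂ P) i j := by
  rintro S hiS hjS ⟨p, hp, hle⟩
  exact ⟨p, hp, hle.trans (deltaLE_coalitionProfile_insert hN hij hiS hjS)⟩

theorem isCompleteGame_generatedGame (hN : IsCompl N₁ N₂) :
    IsCompleteGame (generatedGame N₁ N₂ P) := by
  intro i j
  by_cases hi : i ∈ N₁
  · exact .inl (moreDesirable_generatedGame hN fun _ => hi)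
  · exact .inr (moreDesirable_generatedGame hN fun h => absurd h hi)

theorem not_moreDesirable_generatedGame (hN : Disjoint N₁ N₂) (hP : IsAntichain DeltaLE P)
    {a b : ℕ} (hab : (a + 1, b) ∈ P) (ha : a < #N₁) (hb : b < #N₂) (hi : i ∈ N₁) (hj : j ∈ N₂) :
    ¬ MoreDesirable (generatedGame N₁ N₂ P) j i := by
  intro hji
  obtain ⟨S, hSsub, hS⟩ : ∃ S ⊆ N₁.erase i ∪ N₂.erase j, coalitionProfile N₁ N₂ S = (a, b) := by
    refine exists_subset_coalitionProfile_eq hN (erase_subset i N₁) (erase_subset j N₂) ?_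
    rw [card_erase_of_mem hi, card_erase_of_mem hj]
    exact ⟨Nat.le_sub_one_of_lt ha, Nat.le_sub_one_of_lt hb⟩
  have hiS : i ∉ S := fun h => by simpa [disjoint_left.1 hN hi] using hSsub h
  have hjS : j ∉ S := fun h => by simpa [disjoint_right.1 hN hj] using hSsub h
  have hwin : insert i S ∈ generatedGame N₁ N₂ P :=
    ⟨(a + 1, b), hab, by
      rw [coalitionProfile_insert_left hN hi hiS, hS]
      exact .refl _⟩
  obtain ⟨q, hq, hle⟩ := hji S hjS hiS hwin
  rw [coalitionProfile_insert_right hN hj hjS, hS] at hle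
  have hexchange : DeltaLE ((a, b) + (0, 1)) (a + 1, b) := by
    constructor <;> simp only [Prod.mk_add_mk] <;> omega
  obtain rfl : q = (a + 1, b) := hP.eq hq hab (hle.trans hexchange)
  exact absurd hle.1 (by simp)

theorem twoTypes_generatedGame (hN : IsCompl N₁ N₂) (hP : IsAntichain DeltaLE P)
    (hex : ∃ p ∈ P, 0 < p.1 ∧ p.1 ≤ #N₁ ∧ p.2 < #N₂) :
    TwoTypes (generatedGame N₁ N₂ P) N₁ N₂ := by
  obtain ⟨⟨_ | a, b⟩, hab, hpos, ha, hb⟩ := hex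
  · exact absurd hpos (lt_irrefl 0)
  have hN₂ {i : Fin n} (hi : i ∈ N₂) : i ∉ N₁ := disjoint_right.1 hN.disjoint hi
  refine ⟨card_pos.1 (hpos.trans_le ha), card_pos.1 (Nat.zero_lt_of_lt hb), hN.disjoint,
    hN.sup_eq_top, fun i hi j hj => ⟨?_, ?_⟩, fun i hi j hj => ⟨?_, ?_⟩, fun i hi j hj => ⟨?_, ?_⟩⟩
  · exact moreDesirable_generatedGame hN fun _ => hi
  · exact moreDesirable_generatedGame hN fun _ => hj
  · exact moreDesirable_generatedGame hN fun h => absurd h (hN₂ hj)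
  · exact moreDesirable_generatedGame hN fun h => absurd h (hN₂ hi)
  · exact moreDesirable_generatedGame hN fun _ => hi
  · exact not_moreDesirable_generatedGame hN.disjoint hP hab ha hb hi hj

theorem winningProfile_generatedGame_iff (hN : Disjoint N₁ N₂) {m : ℕ × ℕ} :
    WinningProfile (generatedGame N₁ N₂ P) N₁ N₂ m ↔
      m ≤ (#N₁, #N₂) ∧ ∃ p ∈ P, DeltaLE p m := by
  constructor
  · rintro ⟨S, hS, hfst, hsnd⟩
    obtain rfl : coalitionProfile N₁ N₂ S = m := Prod.ext hfst hsnd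
    exact ⟨coalitionProfile_le, hS⟩
  · rintro ⟨hle, hm⟩
    obtain ⟨S, -, rfl⟩ := exists_subset_coalitionProfile_eq hN Subset.rfl Subset.rfl hle
    exact ⟨S, hm, rfl, rfl⟩

theorem deltaMinProfiles_generatedGame (hN : Disjoint N₁ N₂) (hP : IsAntichain DeltaLE P)
    (hle : ∀ p ∈ P, p ≤ (#N₁, #N₂)) :
    DeltaMinProfiles (generatedGame N₁ N₂ P) N₁ N₂ = P := by
  have hwin {p : ℕ × ℕ} (hp : p ∈ P) : WinningProfile (generatedGame N₁ N₂ P) N₁ N₂ p :=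
    (winningProfile_generatedGame_iff hN).2 ⟨hle p hp, p, hp, .refl p⟩
  ext m
  constructor
  · rintro ⟨hm, hmin⟩
    obtain ⟨-, p, hp, hpm⟩ := (winningProfile_generatedGame_iff hN).1 hm
    exact hmin p (hwin hp) hpm.1 hpm.2 ▸ hp
  · refine fun hm => ⟨hwin hm, fun q hq hfst hsum => ?_⟩
    have hqm : DeltaLE q m := ⟨hfst, hsum⟩
    obtain ⟨-, p, hp, hpq⟩ := (winningProfile_generatedGame_iff hN).1 hq
    obtain rfl : p = m := hP.eq hp hm (hpq.trans hqm)
    exact hqm.antisymm hpq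

end GeneratedGame

theorem exists_isCompl_card_eq (n₁ n₂ : ℕ) :
    ∃ N₁ N₂ : Finset (Fin (n₁ + n₂)), IsCompl N₁ N₂ ∧ #N₁ = n₁ ∧ #N₂ = n₂ :=
  ⟨univ.map (Fin.castAddEmb n₂), (univ.map (Fin.castAddEmb n₂))ᶜ, isCompl_compl,
    by simp, by simp [card_compl]⟩

/-- Part C (existence) of the Carreras–Freixas parametrization theorem:
every nonempty finite set of profiles satisfying the admissibility
conditions arises as the set of δ-minimal winning profiles of some complete
simple game with exactly two types, with prescribed class cardinalities. -/
theorem exists_game_with_profiles (n₁ n₂ : ℕ) (h₁ : 1 ≤ n₁) (h₂ : 1 ≤ n₂)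
    (P : Finset (ℕ × ℕ)) (hP : P.Nonempty)
    (hle : ∀ p ∈ P, p.1 ≤ n₁ ∧ p.2 ≤ n₂)
    (hsing : ∀ m, P = {m} → 0 < m.1 ∧ m.2 < n₂)
    (hpair : ∀ p ∈ P, ∀ q ∈ P, p ≠ q →
      p.1 ≠ q.1 ∧ (q.1 < p.1 ↔ p.1 + p.2 < q.1 + q.2)) :
    ∃ (W : Set (Finset (Fin (n₁ + n₂)))) (N₁ N₂ : Finset (Fin (n₁ + n₂))),
      IsSimpleGame W ∧ IsCompleteGame W ∧ TwoTypes W N₁ N₂ ∧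
      N₁.card = n₁ ∧ N₂.card = n₂ ∧
      DeltaMinProfiles W N₁ N₂ = ↑P := by
  obtain ⟨N₁, N₂, hN, hN₁, hN₂⟩ := exists_isCompl_card_eq n₁ n₂
  have hanti : IsAntichain DeltaLE (P : Set (ℕ × ℕ)) := isAntichain_deltaLE_iff.2 hpair
  have hex : ∃ p ∈ P, 0 < p.1 ∧ p.2 < n₂ := by
    rcases hP.exists_eq_singleton_or_nontrivial with ⟨m, rfl⟩ | hnt
    · exact ⟨m, mem_singleton_self m, hsing m rfl⟩
    · exact exists_fst_pos_snd_lt_of_nontrivial hanti hnt fun p hp => (hle p hp).2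
  obtain ⟨p, hp, hpos, hlt⟩ := hex
  have hzero : 0 ∉ (P : Set (ℕ × ℕ)) := zero_notMem_of_exists_fst_pos hanti ⟨p, hp, hpos⟩
  rw [← hN₂] at hlt
  replace hle : ∀ p ∈ P, p ≤ (#N₁, #N₂) := by rwa [hN₁, hN₂]
  exact ⟨generatedGame N₁ N₂ P, N₁, N₂,
    isSimpleGame_generatedGame ⟨p, hp, hle p hp⟩ hzero,
    isCompleteGame_generatedGame hN,
    twoTypes_generatedGame hN hanti ⟨p, hp, hpos, (hle p hp).1, hlt⟩, hN₁, hN₂,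
    deltaMinProfiles_generatedGame hN.disjoint hanti hle⟩
end
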